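/- There exists a constant c > 0 such that for every R₀ > 1 there is some R ≥ R₀ with |E*(R)| ≥ c · R · √(log R); that is, E*(R) = Ω(R √(log R)). -/

import Mathlib

open Real MeasureTheory

/-- Number of visible lattice points (coprime coordinates) in the ball of radius `R`. -/
noncomputable def Nstar (R : ℝ) : ℕ :=
  Set.ncard {v : ℤ × ℤ × ℤ | v ≠ 0 ∧
    Int.gcd (Int.gcd v.1 v.2.1 : ℤ) v.2.2 = 1 ∧
    (v.1 : ℝ)^2 + (v.2.1 : ℝ)^2 + (v.2.2 : ℝ)^2 ≤ R^2}

/-- The error term `E*(R) = 𝒩*(R) − (4π/(3ζ(3))) R³`. -/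
noncomputable def Estar (R : ℝ) : ℝ :=
  (Nstar R : ℝ) - (4 * π / (3 * (riemannZeta 3).re)) * R^3

/-- The quadratic phase `x ↦ e(h x² / q)` on `ZMod q`. -/
noncomputable def quadPhase (q : ℕ) [NeZero q] (h x : ZMod q) : ℂ :=
  ZMod.stdAddChar (h * x ^ 2)

lemma norm_quadPhase (q : ℕ) [NeZero q] (h x : ZMod q) : ‖quadPhase q h x‖ = 1 := by
  rw [quadPhase, ZMod.stdAddChar_apply]
  exact Circle.norm_coe _

lemma conj_stdAddChar (q : ℕ) [NeZero q] (x : ZMod q) :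
    (starRingEnd ℂ) (ZMod.stdAddChar x) = ZMod.stdAddChar (-x) := by
  rw [ZMod.stdAddChar_apply, ZMod.stdAddChar_apply, AddChar.map_neg_eq_inv, Circle.coe_inv_eq_conj]

lemma normSq_sum_quadPhase (q : ℕ) [NeZero q] (hq : IsUnit (2 : ZMod q)) (h : ZMod q) :
    ‖∑ x, quadPhase q h x‖ ^ 2 = q * (Finset.univ.filter fun t : ZMod q => h * t = 0).card := by
  have key : (∑ x, quadPhase q h x) * (starRingEnd ℂ) (∑ x, quadPhase q h x)
      = q * (Finset.univ.filter fun t : ZMod q => h * t = 0).card := by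
    have h1 : (∑ x, quadPhase q h x) * (starRingEnd ℂ) (∑ x, quadPhase q h x)
        = ∑ t : ZMod q, quadPhase q h t * ∑ y : ZMod q, ZMod.stdAddChar (y * (2 * h * t)) := by
      rw [map_sum, Finset.sum_mul_sum, Finset.sum_comm]
      have : ∀ y : ZMod q, ∑ x, quadPhase q h x * (starRingEnd ℂ) (quadPhase q h y)
          = ∑ t, quadPhase q h t * ZMod.stdAddChar (y * (2 * h * t)) := by
        intro y
        rw [← Equiv.sum_comp (Equiv.addRight y)]
        refine Finset.sum_congr rfl fun t _ => ?_
        simp only [quadPhase, conj_stdAddChar, Equiv.coe_addRight]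
        rw [← AddChar.map_add_eq_mul, ← AddChar.map_add_eq_mul]
        congr 1
        ring
      simp_rw [this]
      rw [Finset.sum_comm]
      simp_rw [Finset.mul_sum]
    rw [h1]
    simp_rw [AddChar.sum_mulShift _ (ZMod.isPrimitive_stdAddChar q)]
    rw [Finset.card_eq_sum_ones, Finset.sum_filter]
    push_cast
    rw [Finset.mul_sum]
    refine Finset.sum_congr rfl fun t _ => ?_
    have hiff : 2 * h * t = 0 ↔ h * t = 0 := by
      rw [mul_assoc]
      exact hq.mul_right_eq_zero
    by_cases ht : h * t = 0
    · have : h * t ^ 2 = 0 := by rw [pow_two, ← mul_assoc, ht, zero_mul]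
      simp [hiff, ht, quadPhase, this]
    · simp [hiff, ht]
  have h2 := Complex.mul_conj (∑ x, quadPhase q h x)
  rw [key, Complex.normSq_eq_norm_sq] at h2
  exact_mod_cast h2.symm

lemma norm_sum_quadPhase_one (q : ℕ) [NeZero q] (hq : IsUnit (2 : ZMod q)) (h : ZMod q)
    (hh : IsUnit h) : ‖∑ x, quadPhase q h x‖ = Real.sqrt q := by
  have := normSq_sum_quadPhase q hq h
  have h3 : (Finset.univ.filter fun t : ZMod q => h * t = 0) = {0} := by
    ext t
    simp [hh.mul_right_eq_zero]
  rw [h3] at this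
  rw [← Real.sqrt_sq (norm_nonneg _), this]
  simp

lemma norm_sum_quadPhase_le (q : ℕ) [NeZero q] (hq : IsUnit (2 : ZMod q)) (hsq : Squarefree q)
    (d : ℕ) (hd : 0 < d) :
    ‖∑ x, quadPhase q ((d : ZMod q) ^ 2) x‖ ≤ Real.sqrt d * Real.sqrt q := by
  have := normSq_sum_quadPhase q hq ((d : ZMod q) ^ 2)
  have h3 : (Finset.univ.filter fun t : ZMod q => (d : ZMod q) ^ 2 * t = 0).card ≤ d := by
    refine le_trans (Finset.card_le_card ?_)
      (IsAddCyclic.card_nsmul_eq_zero_le (α := ZMod q) hd)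
    intro t
    simp only [Finset.mem_filter, Finset.mem_univ, true_and, nsmul_eq_mul]
    intro ht
    have h4 : ((d * t.val : ℕ) : ZMod q) ^ 2 = 0 := by
      rw [Nat.cast_mul, ZMod.natCast_zmod_val, mul_pow, pow_two t, ← mul_assoc, ht, zero_mul]
    rw [← Nat.cast_pow, ZMod.natCast_eq_zero_iff, hsq.dvd_pow_iff_dvd two_ne_zero,
      ← ZMod.natCast_eq_zero_iff, Nat.cast_mul, ZMod.natCast_zmod_val] at h4
    exact h4
  rw [← Real.sqrt_mul (by positivity)]
  apply Real.le_sqrt_of_sq_le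
  rw [this, mul_comm]
  gcongr

lemma card_filter_Icc_modEq (q : ℕ) [NeZero q] (m : ℕ) (c : ZMod q) :
    |((Finset.filter (fun x : ℤ => (x : ZMod q) = c) (Finset.Icc (-m : ℤ) m)).card : ℝ)
      - (2 * m + 1) / q| ≤ 1 := by
  obtain ⟨v, rfl⟩ := ZMod.intCast_surjective c
  have hq : (0 : ℤ) < q := by exact_mod_cast Nat.pos_of_ne_zero (NeZero.ne q)
  have h0 : Finset.Icc (-m : ℤ) m = Finset.Ioc (-m - 1 : ℤ) m := by
    ext x; simp only [Finset.mem_Icc, Finset.mem_Ioc]; omega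
  have h1 := Int.Ioc_filter_modEq_card (-m - 1 : ℤ) m hq v
  have h2 : Finset.filter (fun x : ℤ => (x : ZMod q) = (v : ZMod q)) (Finset.Icc (-m : ℤ) m)
      = Finset.filter (fun x : ℤ => x ≡ v [ZMOD q]) (Finset.Ioc (-m - 1 : ℤ) m) := by
    rw [h0]
    refine Finset.filter_congr fun x _ => ?_
    exact ZMod.intCast_eq_intCast_iff x v q
  rw [h2]
  have hq' : (0 : ℝ) < q := by exact_mod_cast hq
  set a : ℚ := ((m : ℤ) - v : ℚ) / q with ha
  set b : ℚ := (((-m - 1 : ℤ) : ℚ) - v) / q with hb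
  have hba : b ≤ a := by
    rw [ha, hb]; gcongr; linarith [(Nat.cast_nonneg m : (0 : ℚ) ≤ m)]
  have h3 : ((Finset.filter (fun x : ℤ => x ≡ v [ZMOD q]) (Finset.Ioc (-m - 1 : ℤ) m)).card : ℤ)
      = ⌊a⌋ - ⌊b⌋ := by
    rw [h1, max_eq_left]
    · simp [ha, hb]
    · have := Int.floor_le_floor hba
      simpa [ha, hb] using this
  have h4 : |((⌊a⌋ - ⌊b⌋ : ℤ) : ℚ) - (2 * m + 1) / q| ≤ 1 := by
    have hab : a - b = (2 * m + 1) / q := by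
      rw [ha, hb, ← sub_div]; push_cast; ring
    rw [← hab, abs_le]
    push_cast
    constructor <;> linarith [Int.floor_le a, Int.floor_le b, Int.lt_floor_add_one a,
      Int.lt_floor_add_one b]
  rw [← h3] at h4
  have h5 := (Rat.cast_le (K := ℝ)).2 h4
  push_cast at h5
  exact h5

/-- The mean value of a function on `ZMod q`. -/
noncomputable def zmodMean (q : ℕ) [NeZero q] (f : ZMod q → ℂ) : ℂ := (∑ c, f c) / q

lemma norm_zmodMean_le (q : ℕ) [NeZero q] (f : ZMod q → ℂ) (hf : ∀ c, ‖f c‖ ≤ 1) :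
    ‖zmodMean q f‖ ≤ 1 := by
  have hq : (0 : ℝ) < q := by exact_mod_cast Nat.pos_of_ne_zero (NeZero.ne q)
  rw [zmodMean, norm_div, Complex.norm_natCast, div_le_one hq]
  refine (norm_sum_le _ _).trans ((Finset.sum_le_sum fun c _ => hf c).trans ?_)
  simp [ZMod.card]

lemma sum_periodic_Icc (q : ℕ) [NeZero q] (f : ZMod q → ℂ) (hf : ∀ c, ‖f c‖ ≤ 1) (m : ℕ) :
    ‖∑ x ∈ Finset.Icc (-m : ℤ) m, f x - zmodMean q f * (2 * m + 1)‖ ≤ q := by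
  have hq : (0 : ℝ) < q := by exact_mod_cast Nat.pos_of_ne_zero (NeZero.ne q)
  have h1 : ∑ x ∈ Finset.Icc (-m : ℤ) m, f x
      = ∑ c : ZMod q,
        ((Finset.filter (fun x : ℤ => (x : ZMod q) = c) (Finset.Icc (-m : ℤ) m)).card : ℂ) * f c := by
    rw [← Finset.sum_fiberwise (s := Finset.Icc (-m : ℤ) m) (g := fun x : ℤ => (x : ZMod q))]
    refine Finset.sum_congr rfl fun c _ => ?_
    rw [← nsmul_eq_mul, ← Finset.sum_const]
    refine Finset.sum_congr rfl fun x hx => ?_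
    rw [(Finset.mem_filter.1 hx).2]
  have h2 : ∑ x ∈ Finset.Icc (-m : ℤ) m, f x - zmodMean q f * (2 * m + 1)
      = ∑ c : ZMod q,
        (((((Finset.filter (fun x : ℤ => (x : ZMod q) = c) (Finset.Icc (-m : ℤ) m)).card : ℝ)
          - (2 * m + 1) / q : ℝ) : ℂ) * f c) := by
    rw [h1, zmodMean, Finset.sum_div, Finset.sum_mul, ← Finset.sum_sub_distrib]
    refine Finset.sum_congr rfl fun c _ => ?_
    push_cast
    ring
  rw [h2]
  refine (norm_sum_le _ _).trans ((Finset.sum_le_sum (g := fun _ => (1 : ℝ)) fun c _ => ?_).trans ?_)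
  · rw [norm_mul, Complex.norm_real, Real.norm_eq_abs]
    exact mul_le_one₀ (card_filter_Icc_modEq q m c) (norm_nonneg _) (hf c)
  · simp [ZMod.card]

/-- The integer points `v` with `|v|² ≤ n`. -/
noncomputable def latticeBall (n : ℕ) : Finset (ℤ × ℤ × ℤ) :=
  (Finset.Icc (-(Nat.sqrt n : ℤ)) (Nat.sqrt n) ×ˢ Finset.Icc (-(Nat.sqrt n : ℤ)) (Nat.sqrt n) ×ˢ
    Finset.Icc (-(Nat.sqrt n : ℤ)) (Nat.sqrt n)).filter
    fun v => v.1 ^ 2 + v.2.1 ^ 2 + v.2.2 ^ 2 ≤ (n : ℤ)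

lemma mem_Icc_sqrt_iff (n : ℕ) (x : ℤ) :
    x ∈ Finset.Icc (-(Nat.sqrt n : ℤ)) (Nat.sqrt n) ↔ x ^ 2 ≤ (n : ℤ) := by
  rw [Finset.mem_Icc, ← abs_le, Int.abs_eq_natAbs, ← Int.natAbs_pow_two x]
  norm_cast
  rw [Nat.le_sqrt, pow_two]

lemma mem_latticeBall {n : ℕ} {v : ℤ × ℤ × ℤ} :
    v ∈ latticeBall n ↔ v.1 ^ 2 + v.2.1 ^ 2 + v.2.2 ^ 2 ≤ (n : ℤ) := by
  simp only [latticeBall, Finset.mem_filter, Finset.mem_product, mem_Icc_sqrt_iff]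
  constructor
  · exact fun h => h.2
  · intro h
    refine ⟨⟨?_, ?_, ?_⟩, h⟩ <;> nlinarith [sq_nonneg v.1, sq_nonneg v.2.1, sq_nonneg v.2.2]

/-- The sum of `f x * g y * h z` over the integer points of the ball `x² + y² + z² ≤ n`. -/
noncomputable def ballSum {q : ℕ} (n : ℕ) (f g h : ZMod q → ℂ) : ℂ :=
  ∑ v ∈ latticeBall n, f v.1 * g v.2.1 * h v.2.2

lemma ballSum_swap {q : ℕ} (n : ℕ) (f g h : ZMod q → ℂ) : ballSum n f g h = ballSum n g f h := by
  refine Finset.sum_nbij' (fun v => (v.2.1, v.1, v.2.2)) (fun v => (v.2.1, v.1, v.2.2)) ?_ ?_ ?_ ?_ ?_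
  · intro v; simp only [mem_latticeBall]; intro h; linarith
  · intro v; simp only [mem_latticeBall]; intro h; linarith
  · intro v _; rfl
  · intro v _; rfl
  · intro v _; ring

lemma ballSum_swap' {q : ℕ} (n : ℕ) (f g h : ZMod q → ℂ) :
    ballSum n f g h = ballSum n h g f := by
  refine Finset.sum_nbij' (fun v => (v.2.2, v.2.1, v.1)) (fun v => (v.2.2, v.2.1, v.1)) ?_ ?_ ?_ ?_ ?_
  · intro v; simp only [mem_latticeBall]; intro h; linarith
  · intro v; simp only [mem_latticeBall]; intro h; linarith
  · intro v _; rfl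
  · intro v _; rfl
  · intro v _; ring

lemma ballSum_eq {q : ℕ} (n : ℕ) (f g h : ZMod q → ℂ) :
    ballSum n f g h = ∑ p ∈ Finset.Icc (-(Nat.sqrt n : ℤ)) (Nat.sqrt n) ×ˢ
      Finset.Icc (-(Nat.sqrt n : ℤ)) (Nat.sqrt n),
      (∑ x ∈ (Finset.Icc (-(Nat.sqrt n : ℤ)) (Nat.sqrt n)).filter
        fun x => x ^ 2 + p.1 ^ 2 + p.2 ^ 2 ≤ (n : ℤ), f x) * (g p.1 * h p.2) := by
  rw [ballSum, latticeBall, Finset.sum_filter, Finset.sum_product_right]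
  refine Finset.sum_congr rfl fun p _ => ?_
  rw [Finset.sum_filter, Finset.sum_mul]
  refine Finset.sum_congr rfl fun x _ => ?_
  split_ifs <;> ring

lemma filter_Icc_sqrt (n : ℕ) (y z : ℤ) :
    ((Finset.Icc (-(Nat.sqrt n : ℤ)) (Nat.sqrt n)).filter
        fun x => x ^ 2 + y ^ 2 + z ^ 2 ≤ (n : ℤ)) = ∅ ∨ ∃ m : ℕ,
    ((Finset.Icc (-(Nat.sqrt n : ℤ)) (Nat.sqrt n)).filter
        fun x => x ^ 2 + y ^ 2 + z ^ 2 ≤ (n : ℤ)) = Finset.Icc (-m : ℤ) m := by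
  by_cases h : y ^ 2 + z ^ 2 ≤ (n : ℤ)
  · right
    refine ⟨Nat.sqrt (n - y ^ 2 - z ^ 2 : ℤ).toNat, ?_⟩
    ext x
    rw [Finset.mem_filter, mem_Icc_sqrt_iff, mem_Icc_sqrt_iff, Int.toNat_of_nonneg (by linarith)]
    constructor
    · rintro ⟨-, h⟩; linarith
    · intro h; constructor <;> nlinarith [sq_nonneg y, sq_nonneg z]
  · left
    rw [Finset.filter_eq_empty_iff]
    intro x _ hx
    nlinarith [sq_nonneg x]

lemma ballSum_sub_le {q : ℕ} [NeZero q] (n : ℕ) (f g h : ZMod q → ℂ) (hf : ∀ c, ‖f c‖ ≤ 1)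
    (hg : ∀ c, ‖g c‖ ≤ 1) (hh : ∀ c, ‖h c‖ ≤ 1) :
    ‖ballSum n f g h - zmodMean q f * ballSum n (fun _ => 1) g h‖
      ≤ q * (2 * Real.sqrt n + 1) ^ 2 := by
  have hs : (Nat.sqrt n : ℝ) ≤ Real.sqrt n := Real.nat_sqrt_le_real_sqrt
  rw [ballSum_eq, ballSum_eq, Finset.mul_sum, ← Finset.sum_sub_distrib]
  refine (norm_sum_le _ _).trans ((Finset.sum_le_sum (g := fun _ => (q : ℝ)) ?_).trans ?_)
  · intro p _
    rw [← mul_assoc (zmodMean q f), ← sub_mul, norm_mul, norm_mul]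
    have hgh : ‖g p.1‖ * ‖h p.2‖ ≤ 1 := mul_le_one₀ (hg _) (norm_nonneg _) (hh _)
    refine le_trans (mul_le_of_le_one_right (norm_nonneg _) hgh) ?_
    obtain he | ⟨m, hm⟩ := filter_Icc_sqrt n p.1 p.2
    · rw [he]; simp
    · rw [hm]
      have h1 := sum_periodic_Icc q f hf m
      have h2 : ((m : ℤ) + 1 - -(m : ℤ)).toNat = 2 * m + 1 := by omega
      rw [Finset.sum_const, Int.card_Icc, nsmul_eq_mul, mul_one, h2]
      push_cast
      exact h1
  · rw [Finset.sum_const, Finset.card_product, Int.card_Icc, nsmul_eq_mul]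
    have : ((Nat.sqrt n : ℤ) + 1 - -(Nat.sqrt n : ℤ)).toNat = 2 * Nat.sqrt n + 1 := by omega
    rw [this]; push_cast
    rw [mul_comm, pow_two]
    gcongr

lemma ballSum_one {q : ℕ} (n : ℕ) :
    ballSum (q := q) n (fun _ => 1) (fun _ => 1) (fun _ => 1) = ((latticeBall n).card : ℂ) := by
  simp [ballSum]

lemma ballSum_sub_mean_le {q : ℕ} [NeZero q] (n : ℕ) (f : ZMod q → ℂ) (hf : ∀ c, ‖f c‖ ≤ 1) :
    ‖ballSum n f f f - zmodMean q f ^ 3 * (latticeBall n).card‖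
      ≤ 3 * q * (2 * Real.sqrt n + 1) ^ 2 := by
  have h1 : ∀ c : ZMod q, ‖(fun _ => (1 : ℂ)) c‖ ≤ 1 := by simp
  have e1 := ballSum_sub_le n f f f hf hf hf
  have e2 := ballSum_sub_le n f (fun _ => 1) f hf h1 hf
  have e3 := ballSum_sub_le n f (fun _ => 1) (fun _ => 1) hf h1 h1
  rw [ballSum_swap n f (fun _ => 1) f] at e2
  rw [ballSum_swap' n f (fun _ => 1) (fun _ => 1), ballSum_one] at e3
  have hμ := norm_zmodMean_le q f hf
  set μ := zmodMean q f
  set A := ballSum n f f f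
  set B := ballSum n (fun _ => 1) f f
  set C := ballSum n (fun _ => 1) (fun _ => 1) f
  have : A - μ ^ 3 * (latticeBall n).card
      = (A - μ * B) + (μ * (B - μ * C) + μ ^ 2 * (C - μ * (latticeBall n).card)) := by ring
  rw [this]
  have hb : ∀ x : ℂ, ‖μ * x‖ ≤ ‖x‖ := fun x => by
    rw [norm_mul]; exact mul_le_of_le_one_left (norm_nonneg _) hμ
  refine (norm_add_le _ _).trans ?_
  have e4 := norm_add_le (μ * (B - μ * C)) (μ ^ 2 * (C - μ * (latticeBall n).card))
  have e5 := (hb (B - μ * C)).trans e2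
  have e6 : ‖μ ^ 2 * (C - μ * (latticeBall n).card)‖ ≤ q * (2 * Real.sqrt n + 1) ^ 2 := by
    rw [pow_two, mul_assoc]
    exact (hb _).trans ((hb _).trans e3)
  linarith

lemma card_latticeBall_le (n : ℕ) : ((latticeBall n).card : ℝ) ≤ (2 * Real.sqrt n + 1) ^ 3 := by
  have hs : (Nat.sqrt n : ℝ) ≤ Real.sqrt n := Real.nat_sqrt_le_real_sqrt
  have h := Finset.card_filter_le (Finset.Icc (-(Nat.sqrt n : ℤ)) (Nat.sqrt n) ×ˢ
    Finset.Icc (-(Nat.sqrt n : ℤ)) (Nat.sqrt n) ×ˢ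
    Finset.Icc (-(Nat.sqrt n : ℤ)) (Nat.sqrt n))
    fun v => v.1 ^ 2 + v.2.1 ^ 2 + v.2.2 ^ 2 ≤ (n : ℤ)
  rw [Finset.card_product, Finset.card_product, Int.card_Icc] at h
  have h2 : ((Nat.sqrt n : ℤ) + 1 - -(Nat.sqrt n : ℤ)).toNat = 2 * Nat.sqrt n + 1 := by omega
  rw [h2] at h
  calc ((latticeBall n).card : ℝ)
      ≤ (((2 * Nat.sqrt n + 1) * ((2 * Nat.sqrt n + 1) * (2 * Nat.sqrt n + 1)) : ℕ) : ℝ) := by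
        exact_mod_cast h
    _ = (2 * (Nat.sqrt n : ℝ) + 1) ^ 3 := by push_cast; ring
    _ ≤ _ := by gcongr

lemma le_card_latticeBall (n : ℕ) : Real.sqrt n ^ 3 / 8 ≤ ((latticeBall n).card : ℝ) := by
  set k := Nat.sqrt (n / 3) with hk
  have h1 : (Finset.Icc (-k : ℤ) k ×ˢ Finset.Icc (-k : ℤ) k ×ˢ Finset.Icc (-k : ℤ) k)
      ⊆ latticeBall n := by
    intro v
    simp only [Finset.mem_product, hk, mem_Icc_sqrt_iff, mem_latticeBall]
    omega
  have h2 := Finset.card_le_card h1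
  rw [Finset.card_product, Finset.card_product, Int.card_Icc] at h2
  have h3 : ((k : ℤ) + 1 - -(k : ℤ)).toNat = 2 * k + 1 := by omega
  rw [h3] at h2
  have h4 : Real.sqrt n / 2 ≤ 2 * k + 1 := by
    have : n / 3 < (k + 1) * (k + 1) := Nat.lt_succ_sqrt _
    have h5 : n < 4 * ((k + 1) * (k + 1)) := by omega
    have h6 : (n : ℝ) ≤ (2 * (k + 1)) ^ 2 := by
      have : (n : ℝ) < 4 * ((k + 1) * (k + 1)) := by exact_mod_cast h5
      nlinarith
    have h7 : Real.sqrt n ≤ 2 * (k + 1) := Real.sqrt_le_iff.2 ⟨by positivity, h6⟩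
    have : (0 : ℝ) ≤ k := by positivity
    linarith
  calc Real.sqrt n ^ 3 / 8 = (Real.sqrt n / 2) ^ 3 := by ring
    _ ≤ (2 * (k : ℝ) + 1) ^ 3 := by gcongr
    _ = (((2 * k + 1) * ((2 * k + 1) * (2 * k + 1)) : ℕ) : ℝ) := by push_cast; ring
    _ ≤ _ := by exact_mod_cast h2

lemma card_latticeBall_div_le (n d : ℕ) (hd : 0 < d) :
    ((latticeBall (n / d ^ 2)).card : ℝ)
      ≤ (latticeBall n).card / d ^ 3 + 3 * d * (2 * Real.sqrt n + 1) ^ 2 := by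
  have : NeZero d := ⟨hd.ne'⟩
  set f : ZMod d → ℂ := fun c => if c = 0 then 1 else 0 with hf
  have hm : zmodMean d f = 1 / d := by
    simp [zmodMean, hf]
  have hS : ballSum n f f f = (latticeBall (n / d ^ 2)).card := by
    have h1 : ballSum n f f f = ∑ v ∈ latticeBall n,
        if ((v.1 : ZMod d) = 0 ∧ (v.2.1 : ZMod d) = 0 ∧ (v.2.2 : ZMod d) = 0)
          then (1 : ℂ) else 0 := by
      refine Finset.sum_congr rfl fun v _ => ?_
      simp only [hf]
      split_ifs <;> simp_all
    rw [h1, ← Finset.sum_filter, Finset.sum_const, nsmul_eq_mul, mul_one]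
    congr 1
    symm
    refine Finset.card_nbij (fun v => (d * v.1, d * v.2.1, d * v.2.2)) ?_ ?_ ?_
    · intro v hv
      simp only [mem_latticeBall, Finset.coe_filter, Set.mem_ofPred_eq, Finset.mem_coe] at hv ⊢
      refine ⟨?_, by simp⟩
      push_cast at hv
      rw [Int.le_ediv_iff_mul_le (by positivity)] at hv
      linarith
    · intro v _ w _ h
      have : (d : ℤ) ≠ 0 := by exact_mod_cast hd.ne'
      simp only [Prod.mk.injEq, mul_eq_mul_left_iff, this, or_false] at h
      ext <;> simp [h]
    · intro v hv
      simp only [mem_latticeBall, Finset.coe_filter, Set.mem_ofPred_eq,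
        ZMod.intCast_zmod_eq_zero_iff_dvd] at hv
      obtain ⟨hv, ⟨a, ha⟩, ⟨b, hb⟩, ⟨c, hc⟩⟩ := hv
      refine ⟨(a, b, c), ?_, ?_⟩
      · simp only [Finset.mem_coe, mem_latticeBall]
        push_cast
        rw [Int.le_ediv_iff_mul_le (by positivity)]
        rw [ha, hb, hc] at hv
        linarith
      · ext <;> simp [ha, hb, hc]
  have h := ballSum_sub_mean_le n f (by intro c; simp only [hf]; split_ifs <;> simp)
  rw [hS, hm] at h
  have h2 : ((latticeBall (n / d ^ 2)).card : ℂ) - (1 / d) ^ 3 * (latticeBall n).card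
      = (((latticeBall (n / d ^ 2)).card - (latticeBall n).card / d ^ 3 : ℝ) : ℂ) := by
    push_cast; ring
  rw [h2, Complex.norm_real] at h
  linarith [le_abs_self (((latticeBall (n / d ^ 2)).card : ℝ) - (latticeBall n).card / d ^ 3),
    Real.norm_eq_abs (((latticeBall (n / d ^ 2)).card : ℝ) - (latticeBall n).card / d ^ 3)]

/-- The visible points `v` with `|v|² ≤ n`. -/
noncomputable def visibleBall (n : ℕ) : Finset (ℤ × ℤ × ℤ) :=
  (latticeBall n).filter fun v => v ≠ 0 ∧ Int.gcd (Int.gcd v.1 v.2.1 : ℤ) v.2.2 = 1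

/-- The phase `e(|v|² / q)`. -/
noncomputable def normPhase (q : ℕ) [NeZero q] (v : ℤ × ℤ × ℤ) : ℂ :=
  ZMod.stdAddChar ((v.1 : ZMod q) ^ 2 + (v.2.1 : ZMod q) ^ 2 + (v.2.2 : ZMod q) ^ 2)

/-- The exponential sum `∑ e(|v|² / q)` over the visible points of the ball `|v|² ≤ n`. -/
noncomputable def visibleSum (q : ℕ) [NeZero q] (n : ℕ) : ℂ :=
  ∑ v ∈ visibleBall n, normPhase q v

lemma sum_moebius_filter_dvd {g s : ℕ} (hg : 0 < g) (hs : g ≤ s) :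
    ∑ d ∈ (Finset.Icc 1 s).filter (· ∣ g), ArithmeticFunction.moebius d
      = if g = 1 then 1 else 0 := by
  have h1 : (Finset.Icc 1 s).filter (· ∣ g) = g.divisors := by
    ext d
    simp only [Finset.mem_filter, Finset.mem_Icc, Nat.mem_divisors]
    constructor
    · rintro ⟨-, h⟩; exact ⟨h, hg.ne'⟩
    · rintro ⟨h, -⟩
      exact ⟨⟨Nat.pos_of_dvd_of_pos h hg, (Nat.le_of_dvd hg h).trans hs⟩, h⟩
  rw [h1, ← ArithmeticFunction.coe_mul_zeta_apply, ArithmeticFunction.moebius_mul_coe_zeta,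
    ArithmeticFunction.one_apply]

lemma gcd_pos_le_sqrt {n : ℕ} {v : ℤ × ℤ × ℤ} (hv : v ∈ latticeBall n) (h0 : v ≠ 0) :
    0 < Int.gcd (Int.gcd v.1 v.2.1 : ℤ) v.2.2 ∧
      Int.gcd (Int.gcd v.1 v.2.1 : ℤ) v.2.2 ≤ Nat.sqrt n := by
  set g := Int.gcd (Int.gcd v.1 v.2.1 : ℤ) v.2.2 with hg
  have hpos : 0 < g := by
    rw [Nat.pos_iff_ne_zero]
    intro h
    rw [hg, Int.gcd_eq_zero_iff] at h
    obtain ⟨h1, h2⟩ := h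
    rw [Nat.cast_eq_zero, Int.gcd_eq_zero_iff] at h1
    exact h0 (Prod.ext h1.1 (Prod.ext h1.2 h2))
  refine ⟨hpos, ?_⟩
  rw [latticeBall, Finset.mem_filter, Finset.mem_product, Finset.mem_product] at hv
  obtain ⟨⟨b1, b2, b3⟩, -⟩ := hv
  rw [Finset.mem_Icc, ← abs_le] at b1 b2 b3
  have hd3 : (g : ℤ) ∣ v.2.2 := Int.gcd_dvd_right _ _
  have hd12 : (g : ℤ) ∣ (Int.gcd v.1 v.2.1 : ℤ) := Int.gcd_dvd_left _ _
  have hd1 := hd12.trans (Int.gcd_dvd_left v.1 v.2.1)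
  have hd2 := hd12.trans (Int.gcd_dvd_right v.1 v.2.1)
  have key : ∀ x : ℤ, (g : ℤ) ∣ x → |x| ≤ (Nat.sqrt n : ℤ) → x ≠ 0 → g ≤ Nat.sqrt n := by
    intro x hx hb hx0
    have := Int.le_of_dvd (abs_pos.2 hx0) ((dvd_abs _ _).2 hx)
    exact_mod_cast this.trans hb
  by_cases h1 : v.1 = 0
  · by_cases h2 : v.2.1 = 0
    · by_cases h3 : v.2.2 = 0
      · exact absurd (Prod.ext h1 (Prod.ext h2 h3)) h0
      · exact key _ hd3 b3 h3
    · exact key _ hd2 b2 h2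
  · exact key _ hd1 b1 h1

lemma sum_filter_dvd_normPhase (q : ℕ) [NeZero q] (n d : ℕ) (hd : 0 < d) :
    ∑ v ∈ ((latticeBall n).filter (· ≠ 0)).filter
        (fun v => d ∣ Int.gcd (Int.gcd v.1 v.2.1 : ℤ) v.2.2), normPhase q v
      = ballSum (n / d ^ 2) (quadPhase q ((d : ZMod q) ^ 2)) (quadPhase q ((d : ZMod q) ^ 2))
        (quadPhase q ((d : ZMod q) ^ 2)) - 1 := by
  have hd0 : (d : ℤ) ≠ 0 := by exact_mod_cast hd.ne'
  have h0 : (0 : ℤ × ℤ × ℤ) ∈ latticeBall (n / d ^ 2) := by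
    rw [mem_latticeBall]
    simp only [Prod.fst_zero, Prod.snd_zero]
    positivity
  rw [ballSum, ← Finset.add_sum_erase _ _ h0]
  have h1 : quadPhase q ((d : ZMod q) ^ 2) ((0 : ℤ × ℤ × ℤ).1 : ℤ)
      * quadPhase q ((d : ZMod q) ^ 2) ((0 : ℤ × ℤ × ℤ).2.1 : ℤ)
      * quadPhase q ((d : ZMod q) ^ 2) ((0 : ℤ × ℤ × ℤ).2.2 : ℤ) = 1 := by
    simp [quadPhase]
  rw [h1, add_sub_cancel_left]
  symm
  refine Finset.sum_nbij (fun v => (d * v.1, d * v.2.1, d * v.2.2)) ?_ ?_ ?_ ?_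
  · intro v hv
    rw [Finset.mem_erase, mem_latticeBall] at hv
    obtain ⟨hv0, hv⟩ := hv
    simp only [Finset.mem_filter, mem_latticeBall]
    push_cast at hv
    rw [Int.le_ediv_iff_mul_le (by positivity)] at hv
    refine ⟨⟨by linarith, ?_⟩, ?_⟩
    · intro h
      apply hv0
      simp only [Prod.ext_iff, Prod.fst_zero, Prod.snd_zero, mul_eq_zero, hd0, false_or] at h
      exact Prod.ext h.1 (Prod.ext h.2.1 h.2.2)
    · rw [← Int.natCast_dvd_natCast]
      exact Int.dvd_coe_gcd (Int.dvd_coe_gcd (dvd_mul_right _ _) (dvd_mul_right _ _))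
        (dvd_mul_right _ _)
  · intro v _ w _ h
    simp only [Prod.mk.injEq, mul_eq_mul_left_iff, hd0, or_false] at h
    ext <;> simp [h]
  · intro v hv
    simp only [mem_latticeBall, Finset.coe_filter, Set.mem_ofPred_eq, Finset.mem_filter] at hv
    obtain ⟨⟨hv, hv0⟩, hg⟩ := hv
    rw [← Int.natCast_dvd_natCast] at hg
    obtain ⟨c, hc⟩ := hg.trans (Int.gcd_dvd_right _ _)
    have hd12 := hg.trans (Int.gcd_dvd_left _ _)
    obtain ⟨a, ha⟩ := hd12.trans (Int.gcd_dvd_left v.1 v.2.1)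
    obtain ⟨b, hb⟩ := hd12.trans (Int.gcd_dvd_right v.1 v.2.1)
    refine ⟨(a, b, c), ?_, ?_⟩
    · simp only [Finset.coe_erase, Set.mem_sdiff, Finset.mem_coe, mem_latticeBall,
        Set.mem_singleton_iff]
      push_cast
      rw [Int.le_ediv_iff_mul_le (by positivity)]
      rw [ha, hb, hc] at hv
      refine ⟨by linarith, ?_⟩
      intro h
      simp only [Prod.ext_iff, Prod.fst_zero, Prod.snd_zero] at h
      apply hv0
      refine Prod.ext ?_ (Prod.ext ?_ ?_)
      · simp [ha, h.1]
      · simp [hb, h.2.1]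
      · simp [hc, h.2.2]
    · ext <;> simp [ha, hb, hc]
  · intro v _
    simp only [quadPhase, normPhase]
    rw [← AddChar.map_add_eq_mul, ← AddChar.map_add_eq_mul]
    congr 1
    push_cast
    ring

lemma visibleSum_eq (q : ℕ) [NeZero q] (n : ℕ) :
    visibleSum q n = ∑ d ∈ Finset.Icc 1 (Nat.sqrt n), (ArithmeticFunction.moebius d : ℂ) *
      (ballSum (n / d ^ 2) (quadPhase q ((d : ZMod q) ^ 2)) (quadPhase q ((d : ZMod q) ^ 2))
        (quadPhase q ((d : ZMod q) ^ 2)) - 1) := by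
  have h1 : visibleSum q n = ∑ v ∈ (latticeBall n).filter (· ≠ 0),
      ∑ d ∈ (Finset.Icc 1 (Nat.sqrt n)),
        if d ∣ Int.gcd (Int.gcd v.1 v.2.1 : ℤ) v.2.2
          then (ArithmeticFunction.moebius d : ℂ) * normPhase q v else 0 := by
    rw [visibleSum, visibleBall, ← Finset.filter_filter, Finset.sum_filter]
    refine Finset.sum_congr rfl fun v hv => ?_
    rw [Finset.mem_filter] at hv
    obtain ⟨hp, hl⟩ := gcd_pos_le_sqrt hv.1 hv.2
    have := congrArg (fun z : ℤ => (z : ℂ)) (sum_moebius_filter_dvd hp hl)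
    simp only [Int.cast_sum] at this
    rw [← Finset.sum_filter, ← Finset.sum_mul, this]
    split_ifs <;> simp
  rw [h1, Finset.sum_comm]
  refine Finset.sum_congr rfl fun d hd => ?_
  rw [← sum_filter_dvd_normPhase q n d (Finset.mem_Icc.1 hd).1, Finset.mul_sum,
    Finset.sum_filter (p := fun v => d ∣ _)]

lemma sum_inv_sq_Icc_two_le (S : ℕ) : ∑ d ∈ Finset.Icc 2 S, (1 : ℝ) / d ^ 2 ≤ 1 := by
  have h : ∀ m : ℕ, ∑ d ∈ Finset.Icc 2 (m + 1), (1 : ℝ) / d ^ 2 ≤ 1 - 1 / (m + 1) := by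
    intro m
    induction m with
    | zero => simp
    | succ m ih =>
      rw [Finset.sum_Icc_succ_top (by omega)]
      have : (1 : ℝ) / ((m + 1 + 1 : ℕ) : ℝ) ^ 2 ≤ 1 / (m + 1) - 1 / (((m + 1 : ℕ) : ℝ) + 1) := by
        push_cast
        rw [div_sub_div _ _ (by positivity) (by positivity),
          div_le_div_iff₀ (by positivity) (by positivity)]
        have : (0 : ℝ) ≤ m := by positivity
        nlinarith
      linarith
  obtain _ | m := S
  · simp
  · have : (0 : ℝ) ≤ 1 / ((m : ℝ) + 1) := by positivity
    linarith [h m]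

lemma sum_inv_cube_Icc_two_le (S : ℕ) : ∑ d ∈ Finset.Icc 2 S, (1 : ℝ) / d ^ 3 ≤ 1 / 4 := by
  have h : ∀ m : ℕ, ∑ d ∈ Finset.Icc 2 (m + 1), (1 : ℝ) / d ^ 3
      ≤ 1 / 4 - 1 / (2 * (m + 1) * (m + 2)) := by
    intro m
    induction m with
    | zero => norm_num
    | succ m ih =>
      rw [Finset.sum_Icc_succ_top (by omega)]
      have : (1 : ℝ) / ((m + 1 + 1 : ℕ) : ℝ) ^ 3 ≤ 1 / (2 * (m + 1) * (m + 2))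
          - 1 / (2 * (((m + 1 : ℕ) : ℝ) + 1) * (((m + 1 : ℕ) : ℝ) + 2)) := by
        push_cast
        rw [div_sub_div _ _ (by positivity) (by positivity),
          div_le_div_iff₀ (by positivity) (by positivity)]
        have : (0 : ℝ) ≤ m := by positivity
        ring_nf
        nlinarith [pow_nonneg this 2, pow_nonneg this 3, pow_nonneg this 4]
      linarith
  obtain _ | m := S
  · simp
  · have : (0 : ℝ) ≤ 1 / (2 * ((m : ℝ) + 1) * (m + 2)) := by positivity
    linarith [h m]

lemma exists_tail_le {ε : ℝ} (hε : 0 < ε) :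
    ∃ K : ℕ, 2 ≤ K ∧ ∀ S : ℕ,
      ∑ d ∈ Finset.Icc 2 S, (if K < d then (Real.sqrt d / d) ^ 3 else 0) ≤ ε := by
  have hsum : Summable fun d : ℕ => (Real.sqrt d / d) ^ 3 := by
    have h := Real.summable_nat_rpow_inv.2 (by norm_num : (1 : ℝ) < 3 / 2)
    refine h.congr fun d => ?_
    rcases Nat.eq_zero_or_pos d with rfl | hd
    · norm_num
    · have hd' : (0 : ℝ) < d := by exact_mod_cast hd
      rw [Real.sqrt_div_self', one_div, inv_pow, Real.sqrt_eq_rpow, ← Real.rpow_natCast,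
        ← Real.rpow_mul hd'.le]
      norm_num
  obtain ⟨s, hs⟩ := summable_iff_vanishing_norm.1 hsum ε hε
  refine ⟨max 2 (s.sup id), le_max_left _ _, fun S => ?_⟩
  rw [← Finset.sum_filter]
  refine (le_abs_self _).trans (hs _ ?_).le
  rw [Finset.disjoint_left]
  intro d hd hds
  have h1 := (Finset.mem_filter.1 hd).2
  have h2 : d ≤ s.sup id := Finset.le_sup (f := id) hds
  omega

lemma norm_term_sub_le (q : ℕ) [NeZero q] (n d : ℕ) (hd : 1 ≤ d) (hds : d ≤ Nat.sqrt n) :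
    ‖(ballSum (n / d ^ 2) (quadPhase q ((d : ZMod q) ^ 2)) (quadPhase q ((d : ZMod q) ^ 2))
        (quadPhase q ((d : ZMod q) ^ 2)) - 1)
      - zmodMean q (quadPhase q ((d : ZMod q) ^ 2)) ^ 3 * (latticeBall (n / d ^ 2)).card‖
      ≤ 28 * q * n * (1 / d ^ 2) := by
  have hq : (1 : ℝ) ≤ q := by exact_mod_cast Nat.pos_of_ne_zero (NeZero.ne q)
  have h := ballSum_sub_mean_le (n / d ^ 2) (quadPhase q ((d : ZMod q) ^ 2))
    fun c => (norm_quadPhase q _ c).le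
  set A := ballSum (n / d ^ 2) (quadPhase q ((d : ZMod q) ^ 2)) (quadPhase q ((d : ZMod q) ^ 2))
        (quadPhase q ((d : ZMod q) ^ 2))
  set B := zmodMean q (quadPhase q ((d : ZMod q) ^ 2)) ^ 3 * (latticeBall (n / d ^ 2)).card
  have h1 : ‖A - 1 - B‖ ≤ ‖A - B‖ + 1 := by
    have : A - 1 - B = (A - B) - 1 := by ring
    rw [this]
    simpa using norm_sub_le (A - B) 1
  have hd' : (1 : ℝ) ≤ d := by exact_mod_cast hd
  have hdn : d ^ 2 ≤ n := by rw [pow_two]; exact Nat.le_sqrt.1 hds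
  have h2 : ((n / d ^ 2 : ℕ) : ℝ) ≤ n * (1 / d ^ 2) := by
    have := Nat.cast_div_le (α := ℝ) (m := n) (n := d ^ 2)
    push_cast at this
    rwa [mul_one_div]
  have h3 : (1 : ℝ) ≤ n * (1 / d ^ 2) := by
    rw [mul_one_div, le_div_iff₀ (by positivity)]
    exact_mod_cast (by omega : 1 * d ^ 2 ≤ n)
  have h4 : (2 * Real.sqrt ((n / d ^ 2 : ℕ) : ℝ) + 1) ^ 2 ≤ 9 * (n * (1 / d ^ 2)) := by
    set y := (n : ℝ) * (1 / d ^ 2)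
    have h5 : Real.sqrt ((n / d ^ 2 : ℕ) : ℝ) ≤ Real.sqrt y := Real.sqrt_le_sqrt h2
    have h6 : 1 ≤ Real.sqrt y := Real.one_le_sqrt.2 h3
    have h7 : Real.sqrt y ^ 2 = y := Real.sq_sqrt (by linarith)
    rw [← h7]
    calc (2 * Real.sqrt ((n / d ^ 2 : ℕ) : ℝ) + 1) ^ 2 ≤ (3 * Real.sqrt y) ^ 2 := by
          gcongr; linarith
      _ = _ := by ring
  have h8 : 3 * (q : ℝ) * (2 * Real.sqrt ((n / d ^ 2 : ℕ) : ℝ) + 1) ^ 2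
      ≤ 3 * q * (9 * (n * (1 / d ^ 2))) := by gcongr
  have h9 : (1 : ℝ) ≤ q * (n * (1 / d ^ 2)) := one_le_mul_of_one_le_of_one_le hq h3
  linarith

lemma card_latticeBall_div_le' (n d : ℕ) (hd : 1 ≤ d) (hds : d ≤ Nat.sqrt n) :
    ((latticeBall (n / d ^ 2)).card : ℝ) ≤ 216 * (latticeBall n).card / d ^ 3 := by
  have hd' : (1 : ℝ) ≤ d := by exact_mod_cast hd
  have hs : (d : ℝ) ≤ Real.sqrt n := le_trans (by exact_mod_cast hds) Real.nat_sqrt_le_real_sqrt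
  have h2 : Real.sqrt ((n / d ^ 2 : ℕ) : ℝ) ≤ Real.sqrt n / d := by
    rw [← Real.sqrt_sq (by linarith : (0 : ℝ) ≤ d), ← Real.sqrt_div (by positivity)]
    apply Real.sqrt_le_sqrt
    exact_mod_cast Nat.cast_div_le (α := ℝ) (m := n) (n := d ^ 2)
  have h3 : 1 ≤ Real.sqrt n / d := (one_le_div (by linarith)).2 hs
  calc ((latticeBall (n / d ^ 2)).card : ℝ) ≤ (2 * Real.sqrt ((n / d ^ 2 : ℕ) : ℝ) + 1) ^ 3 :=
        card_latticeBall_le _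
    _ ≤ (3 * (Real.sqrt n / d)) ^ 3 := by gcongr; linarith
    _ = 216 * (Real.sqrt n ^ 3 / 8) / d ^ 3 := by ring
    _ ≤ _ := by gcongr; exact le_card_latticeBall n

lemma norm_zmodMean_quadPhase_unit (q : ℕ) [NeZero q] (hq : IsUnit (2 : ZMod q)) (h : ZMod q)
    (hh : IsUnit h) : ‖zmodMean q (quadPhase q h)‖ = 1 / Real.sqrt q := by
  rw [zmodMean, norm_div, norm_sum_quadPhase_one q hq h hh, Complex.norm_natCast,
    Real.sqrt_div_self']

lemma norm_zmodMean_quadPhase_le (q : ℕ) [NeZero q] (hq : IsUnit (2 : ZMod q))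
    (hsq : Squarefree q) (d : ℕ) (hd : 0 < d) :
    ‖zmodMean q (quadPhase q ((d : ZMod q) ^ 2))‖ ≤ Real.sqrt d * (1 / Real.sqrt q) := by
  rw [zmodMean, norm_div, Complex.norm_natCast, ← Real.sqrt_div_self', ← mul_div_assoc]
  gcongr
  exact norm_sum_quadPhase_le q hq hsq d hd

lemma norm_term_le (q K : ℕ) [NeZero q] (hsq : Squarefree q) (hK2 : 2 ≤ K)
    (hcop : Nat.Coprime q K.factorial) (n d : ℕ) (hd : 1 ≤ d) (hds : d ≤ Nat.sqrt n) :
    ‖zmodMean q (quadPhase q ((d : ZMod q) ^ 2)) ^ 3 * (latticeBall (n / d ^ 2)).card‖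
      ≤ (1 / Real.sqrt q) ^ 3 * ((latticeBall n).card * (1 / d ^ 3)
          + (if d ≤ K then 27 * K * (n : ℝ) else 0)
          + 216 * (latticeBall n).card * (if K < d then (Real.sqrt d / d) ^ 3 else 0)) := by
  have hunit : ∀ d : ℕ, 1 ≤ d → d ≤ K → IsUnit (d : ZMod q) := by
    intro d h1 h2
    rw [ZMod.isUnit_iff_coprime]
    exact (hcop.coprime_dvd_right (Nat.dvd_factorial h1 h2)).symm
  have hq : IsUnit (2 : ZMod q) := by exact_mod_cast hunit 2 (by norm_num) hK2
  rw [norm_mul, norm_pow, Complex.norm_natCast]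
  have hd' : (1 : ℝ) ≤ d := by exact_mod_cast hd
  by_cases hdK : d ≤ K
  · rw [if_pos hdK, if_neg (by omega), norm_zmodMean_quadPhase_unit q hq _ ((hunit d hd hdK).pow 2)]
    gcongr
    have h1 := card_latticeBall_div_le n d hd
    have hn : (1 : ℝ) ≤ Real.sqrt n :=
      hd'.trans (le_trans (by exact_mod_cast hds) Real.nat_sqrt_le_real_sqrt)
    have h2 : 3 * (d : ℝ) * (2 * Real.sqrt n + 1) ^ 2 ≤ 3 * K * (3 * Real.sqrt n) ^ 2 := by
      have : (d : ℝ) ≤ K := by exact_mod_cast hdK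
      gcongr
      linarith
    rw [mul_pow, Real.sq_sqrt (by positivity)] at h2
    rw [mul_one_div]
    linarith
  · rw [if_neg hdK, if_pos (by omega), add_zero]
    have h1 := card_latticeBall_div_le' n d hd hds
    have h2 := norm_zmodMean_quadPhase_le q hq hsq d hd
    calc _ ≤ (Real.sqrt d * (1 / Real.sqrt q)) ^ 3 * (216 * (latticeBall n).card / d ^ 3) := by
          gcongr
      _ = (1 / Real.sqrt q) ^ 3 * (216 * (latticeBall n).card * (Real.sqrt d / d) ^ 3) := by
          rw [mul_pow, div_pow (Real.sqrt d)]; ring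
      _ ≤ _ := by
          gcongr
          have : (0 : ℝ) ≤ (latticeBall n).card * (1 / d ^ 3) := by positivity
          linarith

lemma le_norm_visibleSum (q K : ℕ) [NeZero q] (hsq : Squarefree q) (hK2 : 2 ≤ K)
    (hK : ∀ S : ℕ, ∑ d ∈ Finset.Icc 2 S, (if K < d then (Real.sqrt d / d) ^ 3 else 0) ≤ 1 / 864)
    (hcop : Nat.Coprime q K.factorial) (n : ℕ) (hn : 1 ≤ n) :
    (1 / Real.sqrt q) ^ 3 * Real.sqrt n ^ 3 / 16 - (27 * K ^ 2 + 56) * q * n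
      ≤ ‖visibleSum q n‖ := by
  have hq2 : IsUnit (2 : ZMod q) := by
    have : IsUnit ((2 : ℕ) : ZMod q) := by
      rw [ZMod.isUnit_iff_coprime]
      exact (hcop.coprime_dvd_right (Nat.dvd_factorial two_pos hK2)).symm
    exact_mod_cast this
  have hq1 : (1 : ℝ) ≤ q := by exact_mod_cast Nat.pos_of_ne_zero (NeZero.ne q)
  have hS : 1 ≤ Nat.sqrt n := Nat.le_sqrt.2 (by omega)
  set a := 1 / Real.sqrt q with ha
  set B := ((latticeBall n).card : ℝ) with hB
  set u : ℕ → ℂ := fun d => ballSum (n / d ^ 2) (quadPhase q ((d : ZMod q) ^ 2))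
    (quadPhase q ((d : ZMod q) ^ 2)) (quadPhase q ((d : ZMod q) ^ 2)) - 1 with hu
  have hu1 : a ^ 3 * B - 28 * q * n ≤ ‖u 1‖ := by
    have h1 := norm_term_sub_le q n 1 le_rfl hS
    set A := zmodMean q (quadPhase q (((1 : ℕ) : ZMod q) ^ 2)) ^ 3 * (latticeBall (n / 1 ^ 2)).card
      with hA
    have h2 : ‖A‖ = a ^ 3 * B := by
      rw [hA, norm_mul, norm_pow, Complex.norm_natCast,
        norm_zmodMean_quadPhase_unit q hq2 _ (by simp)]
      simp [ha, hB]
    change ‖u 1 - A‖ ≤ _ at h1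
    have h3 := norm_sub_norm_le A (A - u 1)
    rw [sub_sub_cancel, norm_sub_rev A (u 1), h2] at h3
    push_cast at h1
    linarith
  have hu2 : ∀ d ∈ Finset.Icc 2 (Nat.sqrt n),
      ‖(ArithmeticFunction.moebius d : ℂ) * u d‖ ≤ a ^ 3 * (B * (1 / d ^ 3)
          + (if d ≤ K then 27 * K * (n : ℝ) else 0)
          + 216 * B * (if K < d then (Real.sqrt d / d) ^ 3 else 0)) + 28 * q * n * (1 / d ^ 2) := by
    intro d hd
    rw [Finset.mem_Icc] at hd
    have h1 := norm_term_sub_le q n d (by omega) hd.2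
    have h2 := norm_term_le q K hsq hK2 hcop n d (by omega) hd.2
    have h3 : ‖(ArithmeticFunction.moebius d : ℂ)‖ ≤ 1 := by
      rw [Complex.norm_intCast]
      exact_mod_cast ArithmeticFunction.abs_moebius_le_one
    rw [norm_mul]
    refine (mul_le_of_le_one_left (norm_nonneg _) h3).trans ?_
    have h4 := norm_le_norm_add_norm_sub
      (zmodMean q (quadPhase q ((d : ZMod q) ^ 2)) ^ 3 * (latticeBall (n / d ^ 2)).card) (u d)
    rw [norm_sub_rev _ (u d)] at h4
    change ‖u d - _‖ ≤ _ at h1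
    rw [← ha, ← hB] at h2
    linarith
  have hsum : ‖∑ d ∈ Finset.Icc 2 (Nat.sqrt n), (ArithmeticFunction.moebius d : ℂ) * u d‖
      ≤ a ^ 3 * (B * (1 / 4) + 27 * K ^ 2 * n + 216 * B * (1 / 864)) + 28 * q * n := by
    refine (norm_sum_le _ _).trans ((Finset.sum_le_sum hu2).trans ?_)
    rw [Finset.sum_add_distrib, ← Finset.mul_sum, Finset.sum_add_distrib, Finset.sum_add_distrib,
      ← Finset.mul_sum, ← Finset.mul_sum, ← Finset.mul_sum]
    have h1 := sum_inv_cube_Icc_two_le (Nat.sqrt n)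
    have h2 := sum_inv_sq_Icc_two_le (Nat.sqrt n)
    have h3 := hK (Nat.sqrt n)
    have h4 : ∑ d ∈ Finset.Icc 2 (Nat.sqrt n), (if d ≤ K then 27 * K * (n : ℝ) else 0)
        ≤ 27 * K ^ 2 * n := by
      rw [← Finset.sum_filter, Finset.sum_const, nsmul_eq_mul]
      have h5 : ((Finset.Icc 2 (Nat.sqrt n)).filter (· ≤ K)).card ≤ K := by
        refine (Finset.card_le_card (t := Finset.Icc 1 K) ?_).trans (by simp)
        intro d
        simp only [Finset.mem_filter, Finset.mem_Icc]
        omega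
      calc _ ≤ (K : ℝ) * (27 * K * (n : ℝ)) := by gcongr
        _ = _ := by ring
    have hlast : 28 * (q : ℝ) * n * ∑ d ∈ Finset.Icc 2 (Nat.sqrt n), (1 : ℝ) / d ^ 2
        ≤ 28 * q * n := mul_le_of_le_one_right (by positivity) h2
    have ha0 : 0 ≤ a := by positivity
    gcongr
  have hmain : ‖u 1‖ - ‖∑ d ∈ Finset.Icc 2 (Nat.sqrt n), (ArithmeticFunction.moebius d : ℂ) * u d‖
      ≤ ‖visibleSum q n‖ := by
    have h1 : visibleSum q n
        = u 1 - -∑ d ∈ Finset.Icc 2 (Nat.sqrt n), (ArithmeticFunction.moebius d : ℂ) * u d := by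
      rw [visibleSum_eq, sub_neg_eq_add, ← Finset.add_sum_Ioc_eq_sum_Icc hS]
      congr 1
      simp [hu]
    rw [h1]
    simpa using norm_sub_norm_le (u 1)
      (-∑ d ∈ Finset.Icc 2 (Nat.sqrt n), (ArithmeticFunction.moebius d : ℂ) * u d)
  have ha3 : a ^ 3 ≤ 1 := by
    apply pow_le_one₀ (by positivity)
    rw [ha, div_le_one (by positivity)]
    exact Real.one_le_sqrt.2 hq1
  have ha0 : 0 ≤ a ^ 3 := by positivity
  have hBl : a ^ 3 * (Real.sqrt n ^ 3 / 8) ≤ a ^ 3 * B := by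
    gcongr; exact le_card_latticeBall n
  have h7 : a ^ 3 * (27 * K ^ 2 * n) ≤ 27 * K ^ 2 * q * n := by
    calc a ^ 3 * (27 * K ^ 2 * (n : ℝ)) ≤ 1 * (27 * K ^ 2 * (n : ℝ)) := by gcongr
      _ ≤ q * (27 * K ^ 2 * (n : ℝ)) := by gcongr
      _ = _ := by ring
  nlinarith

lemma four_mul_abs_le_norm_exp_sub_one {t : ℝ} (ht : |t| ≤ 1 / 2) :
    4 * |t| ≤ ‖Complex.exp (Complex.I * ((2 * π * t : ℝ) : ℂ)) - 1‖ := by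
  rw [Complex.norm_exp_I_mul_ofReal_sub_one, norm_mul, Real.norm_eq_abs, Real.norm_eq_abs]
  have h1 : 2 * π * t / 2 = π * t := by ring
  have h2 : |π * t| = π * |t| := by rw [abs_mul, abs_of_pos Real.pi_pos]
  have h3 := Real.mul_abs_le_abs_sin (x := π * t) (by rw [h2]; nlinarith [Real.pi_pos])
  rw [h1, abs_of_pos (by norm_num : (0 : ℝ) < 2)]
  rw [h2, ← mul_assoc, div_mul_cancel₀ _ Real.pi_ne_zero] at h3
  linarith

/-- The root of unity `e(1 / q)`. -/
noncomputable def unitPhase (q : ℕ) : ℂ := Complex.exp (Complex.I * ((2 * π * (1 / q) : ℝ) : ℂ))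

lemma norm_unitPhase (q : ℕ) : ‖unitPhase q‖ = 1 := Complex.norm_exp_I_mul_ofReal _

lemma unitPhase_eq (q : ℕ) [NeZero q] : unitPhase q = ZMod.stdAddChar (1 : ZMod q) := by
  have := ZMod.stdAddChar_coe (N := q) 1
  rw [Int.cast_one] at this
  rw [this, unitPhase]
  congr 1
  push_cast
  ring

lemma unitPhase_pow (q : ℕ) [NeZero q] (n : ℕ) :
    unitPhase q ^ n = ZMod.stdAddChar (n : ZMod q) := by
  rw [unitPhase_eq, ← AddChar.map_nsmul_eq_pow, nsmul_eq_mul, mul_one]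

lemma four_div_le_norm_unitPhase_sub_one (q : ℕ) (hq : 2 ≤ q) : 4 / q ≤ ‖1 - unitPhase q‖ := by
  have hq' : (2 : ℝ) ≤ q := by exact_mod_cast hq
  have h0 : (0 : ℝ) ≤ 1 / q := by positivity
  rw [norm_sub_rev]
  refine le_trans ?_ (four_mul_abs_le_norm_exp_sub_one (t := 1 / q) ?_)
  · rw [abs_of_nonneg h0, mul_one_div]
  · rw [abs_of_nonneg h0]
    exact one_div_le_one_div_of_le two_pos hq'

lemma norm_unitPhase_sub_one_le (q : ℕ) : ‖1 - unitPhase q‖ ≤ 7 / q := by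
  rw [norm_sub_rev]
  refine (Real.norm_exp_I_mul_ofReal_sub_one_le).trans ?_
  rw [Real.norm_eq_abs, abs_of_nonneg (by positivity), mul_one_div]
  gcongr
  linarith [Real.pi_lt_d2]

lemma norm_one_sub_unitPhase_mul_conj (q r : ℕ) (hq : 2 ≤ q) (hr : 2 ≤ r) (hqr : q ≠ r) :
    4 / (q * r : ℝ) ≤ ‖1 - unitPhase q * (starRingEnd ℂ) (unitPhase r)‖ := by
  have hq' : (2 : ℝ) ≤ q := by exact_mod_cast hq
  have hr' : (2 : ℝ) ≤ r := by exact_mod_cast hr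
  have h1 : unitPhase q * (starRingEnd ℂ) (unitPhase r)
      = Complex.exp (Complex.I * ((2 * π * (1 / q - 1 / r) : ℝ) : ℂ)) := by
    rw [unitPhase, unitPhase, ← Complex.exp_conj, ← Complex.exp_add]
    congr 1
    rw [map_mul, Complex.conj_I, Complex.conj_ofReal]
    push_cast
    ring
  have h3 : (0 : ℝ) ≤ 1 / q := by positivity
  have h4 : (0 : ℝ) ≤ 1 / r := by positivity
  have h5 : (1 : ℝ) / q ≤ 1 / 2 := one_div_le_one_div_of_le two_pos hq'
  have h6 : (1 : ℝ) / r ≤ 1 / 2 := one_div_le_one_div_of_le two_pos hr'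
  rw [h1, norm_sub_rev]
  refine le_trans ?_ (four_mul_abs_le_norm_exp_sub_one ?_)
  · rw [div_sub_div _ _ (by positivity) (by positivity), abs_div,
      abs_of_pos (by positivity : (0 : ℝ) < q * r), ← mul_div_assoc]
    gcongr
    have : (1 : ℝ) ≤ |1 * (r : ℝ) - q * 1| := by
      have h7 : (1 : ℤ) ≤ |(r : ℤ) - q| := Int.one_le_abs (by omega)
      rw [one_mul, mul_one]
      exact_mod_cast h7
    linarith
  · rw [abs_le]; constructor <;> linarith

lemma one_sub_mul_sum_pow (u : ℕ → ℂ) (z : ℂ) (X : ℕ) :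
    (1 - z) * ∑ n ∈ Finset.range (X + 1), u n * z ^ n
      = u 0 + ∑ n ∈ Finset.range X, (u (n + 1) - u n) * z ^ (n + 1) - u X * z ^ (X + 1) := by
  induction X with
  | zero => simp; ring
  | succ X ih => rw [Finset.sum_range_succ, mul_add, ih, Finset.sum_range_succ _ X]; ring

lemma norm_sum_monotone_mul_pow_le (a : ℕ → ℝ) (ha : Monotone a) (ha0 : 0 ≤ a 0) (z : ℂ)
    (hz : ‖z‖ = 1) (X : ℕ) :
    ‖1 - z‖ * ‖∑ n ∈ Finset.range (X + 1), (a n : ℂ) * z ^ n‖ ≤ 2 * a X := by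
  rw [← norm_mul, one_sub_mul_sum_pow (fun n => (a n : ℂ))]
  have h1 : ‖∑ n ∈ Finset.range X, ((a (n + 1) : ℂ) - a n) * z ^ (n + 1)‖ ≤ a X - a 0 := by
    rw [← Finset.sum_range_sub a X]
    refine (norm_sum_le _ _).trans (Finset.sum_le_sum fun n _ => ?_)
    rw [norm_mul, norm_pow, hz, one_pow, mul_one, ← Complex.ofReal_sub, Complex.norm_real,
      Real.norm_eq_abs, abs_of_nonneg (sub_nonneg.2 (ha n.le_succ))]
  have h2 : ‖(a 0 : ℂ)‖ = a 0 := by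
    rw [Complex.norm_real, Real.norm_eq_abs, abs_of_nonneg ha0]
  have h3 : ‖(a X : ℂ) * z ^ (X + 1)‖ = a X := by
    rw [norm_mul, norm_pow, hz, one_pow, mul_one, Complex.norm_real, Real.norm_eq_abs,
      abs_of_nonneg (ha0.trans (ha X.zero_le))]
  have h4 := norm_add_le (a 0 : ℂ) (∑ n ∈ Finset.range X, ((a (n + 1) : ℂ) - a n) * z ^ (n + 1))
  refine (norm_sub_le _ _).trans ?_
  linarith

lemma monotone_succ_mul_sqrt_sub :
    Monotone fun n : ℕ => ((n + 1 : ℕ) : ℝ) * Real.sqrt (n + 1 : ℕ) - n * Real.sqrt n := by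
  refine monotone_nat_of_le_succ fun n => ?_
  have hc := convexOn_rpow (by norm_num : (1 : ℝ) ≤ 3 / 2)
  have e : ∀ x : ℝ, 0 ≤ x → x * Real.sqrt x = x ^ (3 / 2 : ℝ) := by
    intro x hx
    rw [Real.sqrt_eq_rpow]
    nth_rw 1 [← Real.rpow_one x]
    rw [← Real.rpow_add' hx (by norm_num)]
    norm_num
  have h := hc.2 (show (n : ℝ) ∈ Set.Ici 0 from Set.mem_Ici.2 (Nat.cast_nonneg n))
    (show ((n + 1 + 1 : ℕ) : ℝ) ∈ Set.Ici 0 from Set.mem_Ici.2 (Nat.cast_nonneg _))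
    (show (0 : ℝ) ≤ 1 / 2 by norm_num) (show (0 : ℝ) ≤ 1 / 2 by norm_num) (by norm_num)
  simp only [smul_eq_mul] at h
  have h2 : 1 / 2 * (n : ℝ) + 1 / 2 * ((n + 1 + 1 : ℕ) : ℝ) = ((n + 1 : ℕ) : ℝ) := by
    push_cast; ring
  rw [h2, ← e _ (by positivity), ← e _ (by positivity), ← e _ (by positivity)] at h
  linarith

lemma succ_mul_sqrt_sub_le (n : ℕ) :
    ((n + 1 : ℕ) : ℝ) * Real.sqrt (n + 1 : ℕ) - n * Real.sqrt n ≤ 2 * Real.sqrt (n + 1 : ℕ) := by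
  set s := Real.sqrt (n + 1 : ℕ) with hs
  have hs2 : s ^ 2 = n + 1 := by rw [hs, Real.sq_sqrt (by positivity)]; push_cast; ring
  have hspos : 0 < s := Real.sqrt_pos.2 (by positivity)
  have hn : (0 : ℝ) ≤ n := by positivity
  have h1 : n / s ≤ Real.sqrt n := by
    apply Real.le_sqrt_of_sq_le
    rw [div_pow, hs2, div_le_iff₀ (by positivity)]
    nlinarith
  have h2 : (n : ℝ) * (n / s) ≤ n * Real.sqrt n := by gcongr
  have h3 : (n : ℝ) = s ^ 2 - 1 := by linarith
  have h4 : s ^ 3 - 2 * s ≤ (n : ℝ) * (n / s) := by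
    rw [← mul_div_assoc, le_div_iff₀ hspos, h3]
    nlinarith
  push_cast
  rw [← hs2]
  nlinarith

lemma normPhase_eq_pow (q : ℕ) [NeZero q] (v : ℤ × ℤ × ℤ) (n : ℕ)
    (hv : v.1 ^ 2 + v.2.1 ^ 2 + v.2.2 ^ 2 = (n : ℤ)) : normPhase q v = unitPhase q ^ n := by
  rw [normPhase, unitPhase_pow]
  congr 1
  exact_mod_cast congrArg (fun z : ℤ => (z : ZMod q)) hv

lemma visibleBall_zero : visibleBall 0 = ∅ := by
  rw [visibleBall, Finset.filter_eq_empty_iff]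
  rintro v hv ⟨h0, -⟩
  rw [mem_latticeBall] at hv
  push_cast at hv
  apply h0
  have h1 := sq_nonneg v.1
  have h2 := sq_nonneg v.2.1
  have h3 := sq_nonneg v.2.2
  refine Prod.ext ?_ (Prod.ext ?_ ?_)
  · exact pow_eq_zero_iff two_ne_zero |>.1 (by linarith : v.1 ^ 2 = 0)
  · exact pow_eq_zero_iff two_ne_zero |>.1 (by linarith : v.2.1 ^ 2 = 0)
  · exact pow_eq_zero_iff two_ne_zero |>.1 (by linarith : v.2.2 ^ 2 = 0)

lemma visibleSum_eq_sum_range (q : ℕ) [NeZero q] (X : ℕ) :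
    visibleSum q X = ∑ n ∈ Finset.range X,
      (((visibleBall (n + 1)).card : ℂ) - (visibleBall n).card) * unitPhase q ^ (n + 1) := by
  induction X with
  | zero => simp [visibleSum, visibleBall_zero]
  | succ X ih =>
    have hsub : visibleBall X ⊆ visibleBall (X + 1) := by
      intro v
      simp only [visibleBall, Finset.mem_filter, mem_latticeBall]
      rintro ⟨h, h2⟩
      exact ⟨by push_cast; linarith, h2⟩
    rw [Finset.sum_range_succ, ← ih, visibleSum, visibleSum, ← Finset.sum_sdiff hsub, add_comm]
    congr 1
    rw [← Nat.cast_sub (Finset.card_le_card hsub), ← Finset.card_sdiff_of_subset hsub,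
      ← nsmul_eq_mul, ← Finset.sum_const]
    refine Finset.sum_congr rfl fun v hv => normPhase_eq_pow q v _ ?_
    simp only [visibleBall, Finset.mem_sdiff, Finset.mem_filter, mem_latticeBall, not_and] at hv
    obtain ⟨⟨h1, h2⟩, h3⟩ := hv
    by_contra hne
    refine h3 ?_ h2.1 h2.2
    push_cast at h1 hne
    omega

lemma Nstar_sqrt (n : ℕ) : Nstar (Real.sqrt n) = (visibleBall n).card := by
  rw [Nstar, ← Set.ncard_coe_finset]
  congr 1
  ext v
  simp only [visibleBall, Finset.coe_filter, Set.mem_ofPred_eq, mem_latticeBall]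
  rw [Real.sq_sqrt (by positivity)]
  have : ((v.1 : ℝ) ^ 2 + (v.2.1 : ℝ) ^ 2 + (v.2.2 : ℝ) ^ 2 ≤ (n : ℝ))
      ↔ v.1 ^ 2 + v.2.1 ^ 2 + v.2.2 ^ 2 ≤ (n : ℤ) := by exact_mod_cast Iff.rfl
  rw [this]
  tauto

/-- The density constant `4π / (3 ζ(3))` of visible points. -/
noncomputable def visibleDensity : ℝ := 4 * π / (3 * (riemannZeta 3).re)

lemma Estar_sqrt (n : ℕ) :
    Estar (Real.sqrt n) = (visibleBall n).card - visibleDensity * (n * Real.sqrt n) := by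
  rw [Estar, Nstar_sqrt, visibleDensity, pow_succ, Real.sq_sqrt (by positivity)]

lemma norm_visibleSum_le (q : ℕ) [NeZero q] (hq : 2 ≤ q) (X : ℕ) (hX : 1 ≤ X) :
    ‖visibleSum q X‖ ≤
      7 / q * ‖∑ n ∈ Finset.range (X + 1), (Estar (Real.sqrt n) : ℂ) * unitPhase q ^ n‖
        + |visibleDensity| * (q * Real.sqrt X) + |Estar (Real.sqrt X)| := by
  obtain ⟨Y, rfl⟩ : ∃ Y, X = Y + 1 := ⟨X - 1, by omega⟩
  set z := unitPhase q with hz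
  set a : ℕ → ℝ := fun n => ((n + 1 : ℕ) : ℝ) * Real.sqrt (n + 1 : ℕ) - n * Real.sqrt n with ha
  set D := ∑ n ∈ Finset.range (Y + 1), (a n : ℂ) * z ^ n with hD
  have hD1 : ‖D‖ ≤ q * Real.sqrt (Y + 1 : ℕ) := by
    have h1 := norm_sum_monotone_mul_pow_le a monotone_succ_mul_sqrt_sub (by simp [ha]) z
      (norm_unitPhase q) Y
    have h2 := four_div_le_norm_unitPhase_sub_one q hq
    have h3 := succ_mul_sqrt_sub_le Y
    have h4 : 4 / (q : ℝ) * ‖D‖ ≤ 2 * (2 * Real.sqrt (Y + 1 : ℕ)) :=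
      (mul_le_mul_of_nonneg_right h2 (norm_nonneg _)).trans (h1.trans (by linarith))
    have hq0 : (0 : ℝ) < q := by positivity
    rw [div_mul_eq_mul_div, div_le_iff₀ hq0] at h4
    linarith
  have key : visibleSum q (Y + 1)
      = (1 - z) * ∑ n ∈ Finset.range (Y + 1 + 1), (Estar (Real.sqrt n) : ℂ) * z ^ n
        + visibleDensity * (z * D) + (Estar (Real.sqrt (Y + 1 : ℕ)) : ℂ) * z ^ (Y + 1 + 1) := by
    rw [one_sub_mul_sum_pow (fun n => (Estar (Real.sqrt n) : ℂ)), visibleSum_eq_sum_range]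
    have h0 : Estar (Real.sqrt (0 : ℕ)) = 0 := by
      rw [Estar_sqrt, visibleBall_zero]; simp
    simp only [h0, hD, Finset.mul_sum]
    rw [Complex.ofReal_zero, zero_add, sub_add_eq_add_sub, sub_add_cancel,
      ← Finset.sum_add_distrib]
    refine Finset.sum_congr rfl fun n _ => ?_
    rw [Estar_sqrt, Estar_sqrt, ha]
    push_cast
    ring
  have hnz : ‖z‖ = 1 := norm_unitPhase q
  rw [key]
  refine (norm_add₃_le).trans ?_
  have e1 : ‖(Estar (Real.sqrt (Y + 1 : ℕ)) : ℂ) * z ^ (Y + 1 + 1)‖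
      = |Estar (Real.sqrt (Y + 1 : ℕ))| := by
    rw [norm_mul, norm_pow, hnz, one_pow, mul_one, Complex.norm_real, Real.norm_eq_abs]
  have e2 : ‖(visibleDensity : ℂ) * (z * D)‖ ≤ |visibleDensity| * (q * Real.sqrt (Y + 1 : ℕ)) := by
    rw [norm_mul, norm_mul, hnz, one_mul, Complex.norm_real, Real.norm_eq_abs]
    gcongr
  rw [e1, norm_mul]
  gcongr
  exact norm_unitPhase_sub_one_le q

lemma norm_geom_sum_le (z : ℂ) (hz : ‖z‖ ≤ 1) (N : ℕ) :
    ‖1 - z‖ * ‖∑ n ∈ Finset.range N, z ^ n‖ ≤ 2 := by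
  rw [← norm_mul, mul_neg_geom_sum]
  refine (norm_sub_le _ _).trans ?_
  rw [norm_one, norm_pow]
  linarith [pow_le_one₀ (n := N) (norm_nonneg z) hz]

lemma sq_sum_norm_le (Q : Finset ℕ) (w : ℕ → ℝ) (hw : ∀ q, 0 ≤ w q) (E : ℕ → ℝ) (z : ℕ → ℂ)
    (N : ℕ) :
    (∑ q ∈ Q, w q * ‖∑ n ∈ Finset.range N, (E n : ℂ) * z q ^ n‖) ^ 2
      ≤ (∑ n ∈ Finset.range N, E n ^ 2) *
        ∑ q ∈ Q, ∑ r ∈ Q, w q * w r *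
          ‖∑ n ∈ Finset.range N, (z q * (starRingEnd ℂ) (z r)) ^ n‖ := by
  choose c hc1 hc using fun q => RCLike.exists_norm_eq_mul_self (K := ℂ)
    (∑ n ∈ Finset.range N, (E n : ℂ) * z q ^ n)
  set T : ℕ → ℂ := fun n => ∑ q ∈ Q, w q * c q * z q ^ n with hT
  have h1 : ((∑ q ∈ Q, w q * ‖∑ n ∈ Finset.range N, (E n : ℂ) * z q ^ n‖ : ℝ) : ℂ)
      = ∑ n ∈ Finset.range N, (E n : ℂ) * T n := by
    simp only [hT, Finset.mul_sum]
    rw [Finset.sum_comm]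
    push_cast
    refine Finset.sum_congr rfl fun q _ => ?_
    have := hc q
    simp only [Complex.coe_algebraMap] at this
    rw [this, Finset.mul_sum, Finset.mul_sum]
    refine Finset.sum_congr rfl fun n _ => ?_
    ring
  have h2 : |∑ q ∈ Q, w q * ‖∑ n ∈ Finset.range N, (E n : ℂ) * z q ^ n‖|
      ≤ ∑ n ∈ Finset.range N, |E n| * ‖T n‖ := by
    rw [← Real.norm_eq_abs, ← Complex.norm_real, h1]
    refine (norm_sum_le _ _).trans (le_of_eq (Finset.sum_congr rfl fun n _ => ?_))
    rw [norm_mul, Complex.norm_real, Real.norm_eq_abs]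
  have h3 : (∑ n ∈ Finset.range N, ‖T n‖ ^ 2) ≤ ∑ q ∈ Q, ∑ r ∈ Q, w q * w r *
      ‖∑ n ∈ Finset.range N, (z q * (starRingEnd ℂ) (z r)) ^ n‖ := by
    have h4 : ((∑ n ∈ Finset.range N, ‖T n‖ ^ 2 : ℝ) : ℂ) = ∑ q ∈ Q, ∑ r ∈ Q,
        w q * w r * (c q * (starRingEnd ℂ) (c r)) *
          ∑ n ∈ Finset.range N, (z q * (starRingEnd ℂ) (z r)) ^ n := by
      push_cast
      have h5 : ∀ n ∈ Finset.range N, (‖T n‖ : ℂ) ^ 2 = ∑ q ∈ Q, ∑ r ∈ Q,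
          w q * w r * (c q * (starRingEnd ℂ) (c r)) * (z q * (starRingEnd ℂ) (z r)) ^ n := by
        intro n _
        rw [← Complex.mul_conj', hT, map_sum, Finset.sum_mul_sum]
        refine Finset.sum_congr rfl fun q _ => Finset.sum_congr rfl fun r _ => ?_
        simp only [map_mul, map_pow, Complex.conj_ofReal]
        ring
      rw [Finset.sum_congr rfl h5, Finset.sum_comm]
      refine Finset.sum_congr rfl fun q _ => ?_
      rw [Finset.sum_comm]
      refine Finset.sum_congr rfl fun r _ => ?_
      rw [Finset.mul_sum]
    refine (le_abs_self _).trans ?_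
    rw [← Real.norm_eq_abs, ← Complex.norm_real, h4]
    refine (norm_sum_le _ _).trans (Finset.sum_le_sum fun q _ => ?_)
    refine (norm_sum_le _ _).trans (Finset.sum_le_sum fun r _ => le_of_eq ?_)
    simp only [norm_mul, RCLike.norm_conj, hc1, Complex.norm_real, Real.norm_eq_abs,
      abs_of_nonneg (hw _), mul_one]
  calc _ ≤ (∑ n ∈ Finset.range N, |E n| * ‖T n‖) ^ 2 := sq_le_sq.2 (h2.trans (le_abs_self _))
    _ ≤ (∑ n ∈ Finset.range N, |E n| ^ 2) * ∑ n ∈ Finset.range N, ‖T n‖ ^ 2 :=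
        Finset.sum_mul_sq_le_sq_mul_sq _ _ _
    _ ≤ _ := by
        simp only [sq_abs]
        gcongr

/-- The squarefree integers in `[2, N]` coprime to `M`. -/
def squarefreeCoprime (M N : ℕ) : Finset ℕ :=
  (Finset.Icc 2 N).filter fun q => Squarefree q ∧ Nat.Coprime q M

lemma sum_sum_norm_geom_le (M N L : ℕ) :
    ∑ q ∈ squarefreeCoprime M N, ∑ r ∈ squarefreeCoprime M N,
      (1 / Real.sqrt q) * (1 / Real.sqrt r) *
        ‖∑ n ∈ Finset.range L, (unitPhase q * (starRingEnd ℂ) (unitPhase r)) ^ n‖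
      ≤ L * ∑ q ∈ squarefreeCoprime M N, (1 : ℝ) / q + N ^ 4 := by
  have hmem : ∀ q ∈ squarefreeCoprime M N, 2 ≤ q ∧ q ≤ N := fun q hq =>
    Finset.mem_Icc.1 (Finset.mem_filter.1 hq).1
  have hcard : ((squarefreeCoprime M N).card : ℝ) ≤ N := by
    have : (squarefreeCoprime M N).card ≤ N := by
      refine (Finset.card_filter_le _ _).trans ?_
      rw [Nat.card_Icc]; omega
    exact_mod_cast this
  have hterm : ∀ q ∈ squarefreeCoprime M N, ∀ r ∈ squarefreeCoprime M N,
      (1 / Real.sqrt q) * (1 / Real.sqrt r) *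
        ‖∑ n ∈ Finset.range L, (unitPhase q * (starRingEnd ℂ) (unitPhase r)) ^ n‖
      ≤ (if q = r then (L : ℝ) * (1 / q) else 0) + N ^ 2 := by
    intro q hq r hr
    obtain ⟨hq2, hqN⟩ := hmem q hq
    obtain ⟨hr2, hrN⟩ := hmem r hr
    have hq' : (2 : ℝ) ≤ q := by exact_mod_cast hq2
    have hr' : (2 : ℝ) ≤ r := by exact_mod_cast hr2
    have hqN' : (q : ℝ) ≤ N := by exact_mod_cast hqN
    have hrN' : (r : ℝ) ≤ N := by exact_mod_cast hrN
    have hz : ‖unitPhase q * (starRingEnd ℂ) (unitPhase r)‖ = 1 := by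
      rw [norm_mul, RCLike.norm_conj, norm_unitPhase, norm_unitPhase, one_mul]
    by_cases hqr : q = r
    · subst hqr
      rw [if_pos rfl]
      have h1 : ‖∑ n ∈ Finset.range L, (unitPhase q * (starRingEnd ℂ) (unitPhase q)) ^ n‖ ≤ L := by
        refine (norm_sum_le _ _).trans ?_
        simp only [norm_pow, hz, one_pow]
        simp
      have h2 : (1 / Real.sqrt q) * (1 / Real.sqrt q) = 1 / q := by
        rw [div_mul_div_comm, one_mul, Real.mul_self_sqrt (by positivity)]
      rw [h2]
      have : (1 / q : ℝ) * ‖∑ n ∈ Finset.range L,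
          (unitPhase q * (starRingEnd ℂ) (unitPhase q)) ^ n‖ ≤ 1 / q * L := by gcongr
      nlinarith [sq_nonneg (N : ℝ)]
    · rw [if_neg hqr, zero_add]
      have h1 := norm_geom_sum_le (unitPhase q * (starRingEnd ℂ) (unitPhase r)) hz.le L
      have h2 := norm_one_sub_unitPhase_mul_conj q r hq2 hr2 hqr
      set G := ‖∑ n ∈ Finset.range L, (unitPhase q * (starRingEnd ℂ) (unitPhase r)) ^ n‖
      have hG : 0 ≤ G := norm_nonneg _
      have h3 : 4 / (q * r : ℝ) * G ≤ 2 := (mul_le_mul_of_nonneg_right h2 hG).trans h1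
      rw [div_mul_eq_mul_div, div_le_iff₀ (by positivity)] at h3
      have h4 : (q * r : ℝ) ≤ N ^ 2 := by rw [pow_two]; gcongr
      have h5 : (1 / Real.sqrt q) * (1 / Real.sqrt r) ≤ 1 := by
        apply mul_le_one₀ _ (by positivity) _
        · rw [div_le_one (by positivity)]; exact Real.one_le_sqrt.2 (by linarith)
        · rw [div_le_one (by positivity)]; exact Real.one_le_sqrt.2 (by linarith)
      refine (mul_le_of_le_one_left hG h5).trans ?_
      linarith
  refine (Finset.sum_le_sum fun q hq => Finset.sum_le_sum fun r hr => hterm q hq r hr).trans ?_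
  simp only [Finset.sum_add_distrib, Finset.sum_ite_eq, Finset.sum_const, nsmul_eq_mul]
  rw [Finset.sum_ite_of_true (fun q hq => hq), ← Finset.mul_sum]
  have h6 : ((squarefreeCoprime M N).card : ℝ) * ((squarefreeCoprime M N).card * (N : ℝ) ^ 2)
      ≤ N * (N * (N : ℝ) ^ 2) := by gcongr
  linarith [show (N : ℝ) * (N * (N : ℝ) ^ 2) = N ^ 4 by ring]

lemma log_le_sum_inv_squarefreeCoprime (M N : ℕ) (hM : 0 < M) (hN : 1 ≤ N) :
    Real.log N - Real.log M
      ≤ 4 * M * (1 + ∑ q ∈ squarefreeCoprime M N, (1 : ℝ) / q) := by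
  have hM' : (1 : ℝ) ≤ M := by exact_mod_cast hM
  set J := (N - 1) / M with hJ
  set Q := (Finset.Icc 1 N).filter fun q => Squarefree q ∧ Nat.Coprime q M with hQ
  have hlog : Real.log N - Real.log M ≤ ∑ j ∈ Finset.Icc 1 J, (1 : ℝ) / j := by
    have h1 := log_add_one_le_harmonic J
    rw [harmonic_eq_sum_Icc] at h1
    push_cast at h1
    simp only [one_div]
    refine le_trans ?_ h1
    rw [← Real.log_div (by positivity) (by positivity)]
    apply Real.log_le_log (by positivity)
    rw [div_le_iff₀ (by positivity)]
    have h2 : N - 1 < M * (J + 1) := by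
      rw [hJ]; exact Nat.lt_mul_div_succ _ hM
    have h3 : N ≤ (J + 1) * M := by rw [mul_comm]; omega
    exact_mod_cast h3
  have hJN : ∀ j ∈ Finset.Icc 1 J, 1 + M * j ≤ N := by
    intro j hj
    have h1 : M * j ≤ M * J := Nat.mul_le_mul_left _ (Finset.mem_Icc.1 hj).2
    have h2 : M * J ≤ N - 1 := Nat.mul_div_le _ _
    omega
  choose s m hsm hs using fun j : ℕ => Nat.sq_mul_squarefree (1 + M * j)
  have hinj : Set.InjOn (fun j => (s j, m j)) (Finset.Icc 1 J : Set ℕ) := by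
    intro i _ j _ hij
    simp only [Prod.mk.injEq] at hij
    have h1 := hsm i
    rw [hij.1, hij.2, hsm j] at h1
    exact (Nat.eq_of_mul_eq_mul_left hM (by omega)).symm
  have hmaps : ∀ j ∈ Finset.Icc 1 J, (s j, m j) ∈ Q ×ˢ Finset.Icc 1 N := by
    intro j hj
    have h1 := hsm j
    have h2 := hJN j hj
    have hspos : s j ≠ 0 := by intro h; rw [h] at h1; omega
    have hmpos : m j ≠ 0 := by intro h; rw [h] at h1; simp at h1; omega
    have hsd : s j ∣ 1 + M * j := ⟨m j ^ 2, by rw [← h1, mul_comm]⟩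
    have hmd : m j ∣ 1 + M * j := ⟨m j * s j, by rw [← h1]; ring⟩
    have hsN := (Nat.le_of_dvd (by omega) hsd).trans h2
    have hmN := (Nat.le_of_dvd (by omega) hmd).trans h2
    simp only [hQ, Finset.mem_product, Finset.mem_filter, Finset.mem_Icc]
    refine ⟨⟨⟨by omega, hsN⟩, hs j, ?_⟩, by omega, hmN⟩
    refine Nat.Coprime.coprime_dvd_left hsd ?_
    simp
  have hprod : ∑ j ∈ Finset.Icc 1 J, (1 : ℝ) / (1 + M * j : ℕ)
      ≤ (∑ q ∈ Q, (1 : ℝ) / q) * ∑ k ∈ Finset.Icc 1 N, (1 : ℝ) / k ^ 2 := by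
    rw [Finset.sum_mul_sum, ← Finset.sum_product']
    have h1 : ∑ j ∈ Finset.Icc 1 J, (1 : ℝ) / (1 + M * j : ℕ)
        = ∑ p ∈ (Finset.Icc 1 J).image (fun j => (s j, m j)),
          (1 : ℝ) / p.1 * (1 / (p.2 : ℝ) ^ 2) := by
      rw [Finset.sum_image hinj]
      refine Finset.sum_congr rfl fun j _ => ?_
      rw [← hsm j, div_mul_div_comm, one_mul]
      push_cast
      rw [mul_comm]
    rw [h1]
    refine Finset.sum_le_sum_of_subset_of_nonneg (Finset.image_subset_iff.2 hmaps) ?_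
    intro p _ _
    positivity
  have hsq : ∑ k ∈ Finset.Icc 1 N, (1 : ℝ) / k ^ 2 ≤ 2 := by
    rw [← Finset.add_sum_Ioc_eq_sum_Icc hN]
    have := sum_inv_sq_Icc_two_le N
    have h2 : Finset.Ioc 1 N = Finset.Icc 2 N := by ext; simp [Nat.succ_le_iff]
    rw [h2]
    norm_num at this ⊢
    linarith
  have hQ1 : ∑ q ∈ Q, (1 : ℝ) / q ≤ 1 + ∑ q ∈ squarefreeCoprime M N, (1 : ℝ) / q := by
    have h1 : Q ⊆ insert 1 (squarefreeCoprime M N) := by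
      intro q
      simp only [hQ, squarefreeCoprime, Finset.mem_filter, Finset.mem_Icc, Finset.mem_insert]
      rintro ⟨⟨h1, h2⟩, h3⟩
      by_cases h : q = 1
      · exact Or.inl h
      · exact Or.inr ⟨⟨by omega, h2⟩, h3⟩
    refine (Finset.sum_le_sum_of_subset_of_nonneg h1 fun q _ _ => by positivity).trans ?_
    rw [Finset.sum_insert (by simp [squarefreeCoprime])]
    simp
  have hlow : ∑ j ∈ Finset.Icc 1 J, (1 : ℝ) / j
      ≤ 2 * M * ∑ j ∈ Finset.Icc 1 J, (1 : ℝ) / (1 + M * j : ℕ) := by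
    rw [Finset.mul_sum]
    refine Finset.sum_le_sum fun j hj => ?_
    have hj1 : (1 : ℝ) ≤ j := by exact_mod_cast (Finset.mem_Icc.1 hj).1
    rw [mul_one_div, div_le_div_iff₀ (by positivity) (by positivity)]
    push_cast
    nlinarith
  have hQ0 : 0 ≤ ∑ q ∈ Q, (1 : ℝ) / q := Finset.sum_nonneg fun q _ => by positivity
  have hfin : (∑ q ∈ Q, (1 : ℝ) / q) * ∑ k ∈ Finset.Icc 1 N, (1 : ℝ) / k ^ 2
      ≤ (1 + ∑ q ∈ squarefreeCoprime M N, (1 : ℝ) / q) * 2 := by gcongr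
  calc _ ≤ 2 * M * ∑ j ∈ Finset.Icc 1 J, (1 : ℝ) / (1 + M * j : ℕ) := hlog.trans hlow
    _ ≤ 2 * M * ((1 + ∑ q ∈ squarefreeCoprime M N, (1 : ℝ) / q) * 2) := by
        gcongr; exact hprod.trans hfin
    _ = _ := by ring

lemma eventually_log_le_sum_inv (M : ℕ) (hM : 0 < M) :
    ∀ᶠ N : ℕ in Filter.atTop,
      Real.log N / (8 * M) ≤ ∑ q ∈ squarefreeCoprime M N, (1 : ℝ) / q := by
  have hM' : (1 : ℝ) ≤ M := by exact_mod_cast hM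
  have hlog := Real.tendsto_log_atTop.comp (tendsto_natCast_atTop_atTop (R := ℝ))
  filter_upwards [hlog.eventually_ge_atTop (2 * (Real.log M + 4 * M)),
    Filter.eventually_ge_atTop 1] with N h1 h2
  have h3 := log_le_sum_inv_squarefreeCoprime M N hM h2
  simp only [Function.comp] at h1
  rw [div_le_iff₀ (by positivity)]
  linarith

lemma le_norm_sum_Estar (q K N : ℕ) (hq : 2 ≤ q) (hqN : q ≤ N) (hsq : Squarefree q)
    (hcop : Nat.Coprime q K.factorial) (hK2 : 2 ≤ K)
    (hK : ∀ S, ∑ d ∈ Finset.Icc 2 S, (if K < d then (Real.sqrt d / d) ^ 3 else 0) ≤ (1 : ℝ) / 864)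
    (hE : |Estar (Real.sqrt (N ^ 6 : ℕ))| ≤ N ^ 6)
    (hN : 32 * (27 * K ^ 2 + 57 + |visibleDensity|) ≤ Real.sqrt N) :
    1 / Real.sqrt q * N ^ 9 / 224 ≤
      ‖∑ n ∈ Finset.range (N ^ 6 + 1), (Estar (Real.sqrt n) : ℂ) * unitPhase q ^ n‖ := by
  have : NeZero q := ⟨by omega⟩
  have hN1 : 1 ≤ N := by omega
  have hX : 1 ≤ N ^ 6 := Nat.one_le_pow _ _ hN1
  have h1 := (le_norm_visibleSum q K hsq hK2 hK hcop (N ^ 6) hX).trans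
    (norm_visibleSum_le q hq (N ^ 6) hX)
  have hsX : Real.sqrt (N ^ 6 : ℕ) = N ^ 3 := by
    rw [show ((N ^ 6 : ℕ) : ℝ) = (N ^ 3) ^ 2 by push_cast; ring]
    exact Real.sqrt_sq (by positivity)
  set G := ‖∑ n ∈ Finset.range (N ^ 6 + 1), (Estar (Real.sqrt n) : ℂ) * unitPhase q ^ n‖
  rw [hsX] at h1 hE
  push_cast at h1
  have hN' : (1 : ℝ) ≤ N := by exact_mod_cast hN1
  have hq1 : (1 : ℝ) ≤ q := by exact_mod_cast (by omega : 1 ≤ q)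
  have hqN' : (q : ℝ) ≤ N := by exact_mod_cast hqN
  set s := Real.sqrt q with hs
  set t := Real.sqrt N with ht
  have hst : s ≤ t := Real.sqrt_le_sqrt hqN'
  have hs1 : 1 ≤ s := Real.one_le_sqrt.2 hq1
  have hqs : (q : ℝ) = s ^ 2 := (Real.sq_sqrt (by positivity)).symm
  have hNt : (N : ℝ) = t ^ 2 := (Real.sq_sqrt (by positivity)).symm
  set D := |visibleDensity|
  have hD : 0 ≤ D := abs_nonneg _
  set C : ℝ := 27 * K ^ 2 + 57 + D with hC
  have hC0 : 0 ≤ C := by positivity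
  have h2 : 32 * C * s ^ 5 ≤ (N : ℝ) ^ 3 := by
    calc 32 * C * s ^ 5 ≤ t * t ^ 5 := by gcongr
      _ = (N : ℝ) ^ 3 := by rw [hNt]; ring
  have h3 : C * q * (N : ℝ) ^ 6 ≤ (1 / s) ^ 3 * N ^ 9 / 32 := by
    rw [one_div, inv_pow, inv_mul_eq_div, div_div, le_div_iff₀ (by positivity)]
    calc C * q * (N : ℝ) ^ 6 * (s ^ 3 * 32) = 32 * C * s ^ 5 * N ^ 6 := by rw [hqs]; ring
      _ ≤ (N : ℝ) ^ 3 * N ^ 6 := by gcongr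
      _ = (N : ℝ) ^ 9 := by ring
  have h4 : D * (q * (N : ℝ) ^ 3) ≤ D * (q * (N : ℝ) ^ 6) := by
    gcongr
    norm_num
  have h5 : (N : ℝ) ^ 6 ≤ q * N ^ 6 := le_mul_of_one_le_left (by positivity) hq1
  have h6 : (1 / s) ^ 3 * N ^ 9 / 32 ≤ 7 / q * G := by
    have h7 : ((N : ℝ) ^ 3) ^ 3 = N ^ 9 := by ring
    rw [h7] at h1
    have h8 : C * q * (N : ℝ) ^ 6
        = (27 * K ^ 2 + 56) * q * N ^ 6 + D * (q * (N : ℝ) ^ 6) + q * N ^ 6 := by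
      rw [hC]; ring
    linarith
  have hs0 : s ≠ 0 := by positivity
  have h9 : 1 / s * N ^ 9 / 224 = (1 / s) ^ 3 * N ^ 9 / 32 * (q / 7) := by
    rw [hqs]; field_simp; norm_num
  have h10 : G = 7 / q * G * (q / 7) := by
    have : (q : ℝ) ≠ 0 := by positivity
    field_simp
  rw [h9, h10]
  gcongr

lemma eventually_sum_sq_Estar_le (ε R₀ : ℝ) (hε : 0 < ε) (hR₀ : 1 < R₀)
    (h : ∀ R ≥ R₀, |Estar R| < ε * R * Real.sqrt (Real.log R)) :
    ∀ᶠ N : ℕ in Filter.atTop, ∑ n ∈ Finset.range (N ^ 6 + 1), Estar (Real.sqrt n) ^ 2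
      ≤ 7 * ε ^ 2 * N ^ 12 * Real.log N := by
  set B := ⌈R₀ ^ 2⌉₊ with hB
  set T := ∑ n ∈ Finset.range B, Estar (Real.sqrt n) ^ 2 with hT
  have hlog : Filter.Tendsto (fun N : ℕ => Real.log N) Filter.atTop Filter.atTop :=
    Real.tendsto_log_atTop.comp tendsto_natCast_atTop_atTop
  filter_upwards [hlog.eventually_ge_atTop (T / ε ^ 2), Filter.eventually_ge_atTop 1] with N hN hN1
  have hN' : (1 : ℝ) ≤ N := by exact_mod_cast hN1
  have hL : 0 ≤ Real.log N := Real.log_nonneg hN'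
  rw [div_le_iff₀ (by positivity)] at hN
  have hterm : ∀ n ∈ Finset.range (N ^ 6 + 1), Estar (Real.sqrt n) ^ 2
      ≤ (if n < B then Estar (Real.sqrt n) ^ 2 else 0) + ε ^ 2 * N ^ 6 * (3 * Real.log N) := by
    intro n hn
    have hn6 : n ≤ N ^ 6 := by have := Finset.mem_range.1 hn; omega
    split_ifs with hnB
    · have : 0 ≤ ε ^ 2 * N ^ 6 * (3 * Real.log N) := by positivity
      linarith
    · rw [zero_add]
      have h1 : R₀ ^ 2 ≤ n := (Nat.le_ceil _).trans (by exact_mod_cast not_lt.1 hnB)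
      have h2 : R₀ ≤ Real.sqrt n := Real.le_sqrt_of_sq_le h1
      have h3 := h _ h2
      have hn1 : (1 : ℝ) ≤ n := by nlinarith
      have h4 : Real.log (Real.sqrt n) ≤ 3 * Real.log N := by
        rw [Real.log_sqrt (by positivity)]
        have : Real.log n ≤ Real.log ((N : ℝ) ^ 6) :=
          Real.log_le_log (by positivity) (by exact_mod_cast hn6)
        rw [Real.log_pow] at this
        push_cast at this
        linarith
      have h5 : 0 ≤ Real.log (Real.sqrt n) := Real.log_nonneg (by linarith)
      calc Estar (Real.sqrt n) ^ 2 = |Estar (Real.sqrt n)| ^ 2 := (sq_abs _).symm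
        _ ≤ (ε * Real.sqrt n * Real.sqrt (Real.log (Real.sqrt n))) ^ 2 := by gcongr
        _ = ε ^ 2 * n * Real.log (Real.sqrt n) := by
          rw [mul_pow, mul_pow, Real.sq_sqrt (by positivity), Real.sq_sqrt h5]
        _ ≤ ε ^ 2 * N ^ 6 * (3 * Real.log N) := by
          gcongr
          exact_mod_cast hn6
  refine (Finset.sum_le_sum hterm).trans ?_
  rw [Finset.sum_add_distrib, Finset.sum_const, Finset.card_range, nsmul_eq_mul,
    ← Finset.sum_filter]
  have h6 : ∑ n ∈ (Finset.range (N ^ 6 + 1)).filter (· < B), Estar (Real.sqrt n) ^ 2 ≤ T := by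
    apply Finset.sum_le_sum_of_subset_of_nonneg
    · intro n hn
      exact Finset.mem_range.2 (Finset.mem_filter.1 hn).2
    · intros; positivity
  have h7 : (1 : ℝ) ≤ N ^ 12 := one_le_pow₀ hN'
  have h8 : ((N ^ 6 + 1 : ℕ) : ℝ) ≤ 2 * N ^ 6 := by
    push_cast
    linarith [one_le_pow₀ (n := 6) hN']
  have h9 : ((N ^ 6 + 1 : ℕ) : ℝ) * (ε ^ 2 * N ^ 6 * (3 * Real.log N))
      ≤ 2 * N ^ 6 * (ε ^ 2 * N ^ 6 * (3 * Real.log N)) := by gcongr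
  have h10 : Real.log N * ε ^ 2 ≤ N ^ 12 * (Real.log N * ε ^ 2) :=
    le_mul_of_one_le_left (by positivity) h7
  have h11 : 2 * (N : ℝ) ^ 6 * (ε ^ 2 * N ^ 6 * (3 * Real.log N))
      = 6 * ε ^ 2 * N ^ 12 * Real.log N := by ring
  linarith

theorem Estar_Omega :
    ∃ c > (0:ℝ), ∀ R₀ > (1:ℝ), ∃ R ≥ R₀, c * R * Real.sqrt (Real.log R) ≤ |Estar R| := by
  obtain ⟨K, hK2, hK⟩ := exists_tail_le (ε := 1 / 864) (by norm_num)
  obtain ⟨M, hMK⟩ : ∃ M, M = K.factorial := ⟨_, rfl⟩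
  have hM : 0 < M := hMK ▸ K.factorial_pos
  have hM' : (1 : ℝ) ≤ M := by exact_mod_cast hM
  obtain ⟨ε, hε⟩ : ∃ ε : ℝ, ε = 1 / (10000 * M) := ⟨_, rfl⟩
  have hε0 : 0 < ε := by rw [hε]; positivity
  have hε1 : ε ≤ 1 := by rw [hε, div_le_one (by positivity)]; linarith
  have hεM : ε ^ 2 * (8 * M) * (21 * 224 ^ 2) < 1 := by
    rw [hε, div_pow, one_pow, div_mul_eq_mul_div, div_mul_eq_mul_div, div_lt_one (by positivity)]
    nlinarith
  refine ⟨ε, hε0, fun R₀ hR₀ => ?_⟩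
  by_contra! hcon
  have hlog : Filter.Tendsto (fun N : ℕ => Real.log N) Filter.atTop Filter.atTop :=
    Real.tendsto_log_atTop.comp tendsto_natCast_atTop_atTop
  have hsqrt : Filter.Tendsto (fun N : ℕ => Real.sqrt N) Filter.atTop Filter.atTop :=
    Real.tendsto_sqrt_atTop.comp tendsto_natCast_atTop_atTop
  obtain ⟨N, h1, h2, h3, h4, h5, h6⟩ := ((eventually_log_le_sum_inv M hM).and
    ((eventually_sum_sq_Estar_le ε R₀ hε0 hR₀ hcon).and
    ((hlog.eventually_ge_atTop (8 * M)).and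
    ((hsqrt.eventually_ge_atTop (32 * (27 * K ^ 2 + 57 + |visibleDensity|))).and
    ((tendsto_natCast_atTop_atTop.eventually_ge_atTop R₀).and
    (Filter.eventually_ge_atTop 1)))))).exists
  have hN' : (1 : ℝ) ≤ N := by exact_mod_cast h6
  have hE : |Estar (Real.sqrt (N ^ 6 : ℕ))| ≤ N ^ 6 := by
    have hsX : Real.sqrt (N ^ 6 : ℕ) = N ^ 3 := by
      rw [show ((N ^ 6 : ℕ) : ℝ) = (N ^ 3) ^ 2 by push_cast; ring]
      exact Real.sqrt_sq (by positivity)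
    rw [hsX]
    have h7 : (N : ℝ) ≤ N ^ 3 := le_self_pow₀ hN' (by norm_num)
    have h8 : Real.sqrt (Real.log ((N : ℝ) ^ 3)) ≤ N ^ 3 := by
      apply Real.sqrt_le_iff.2 ⟨by positivity, ?_⟩
      have h9 : Real.log ((N : ℝ) ^ 3) ≤ N ^ 3 := Real.log_le_self (by positivity)
      nlinarith
    calc |Estar ((N : ℝ) ^ 3)| ≤ ε * N ^ 3 * Real.sqrt (Real.log ((N : ℝ) ^ 3)) :=
          (hcon _ (h5.trans h7)).le
      _ ≤ 1 * N ^ 3 * N ^ 3 := by gcongr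
      _ = (N : ℝ) ^ 6 := by ring
  obtain ⟨S, hS⟩ : ∃ S, S = ∑ q ∈ squarefreeCoprime M N, (1 : ℝ) / q := ⟨_, rfl⟩
  rw [← hS] at h1
  have hS1 : 1 ≤ S := by
    refine le_trans ?_ h1
    rwa [one_le_div (by positivity)]
  have hlow : S * N ^ 9 / 224 ≤ ∑ q ∈ squarefreeCoprime M N, 1 / Real.sqrt q *
      ‖∑ n ∈ Finset.range (N ^ 6 + 1), (Estar (Real.sqrt n) : ℂ) * unitPhase q ^ n‖ := by
    rw [hS, Finset.sum_mul, Finset.sum_div]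
    refine Finset.sum_le_sum fun q hq => ?_
    simp only [squarefreeCoprime, Finset.mem_filter, Finset.mem_Icc] at hq
    have h7 := le_norm_sum_Estar q K N hq.1.1 hq.1.2 hq.2.1 (hMK ▸ hq.2.2) hK2 hK hE h4
    have h8 : (1 : ℝ) / q = 1 / Real.sqrt q * (1 / Real.sqrt q) := by
      rw [div_mul_div_comm, one_mul, Real.mul_self_sqrt (by positivity)]
    calc (1 : ℝ) / q * N ^ 9 / 224 = 1 / Real.sqrt q * (1 / Real.sqrt q * N ^ 9 / 224) := by
          rw [h8]; ring
      _ ≤ _ := by gcongr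
  have hup := sq_sum_norm_le (squarefreeCoprime M N) (fun q => 1 / Real.sqrt q)
    (fun q => by positivity) (fun n => Estar (Real.sqrt n)) unitPhase (N ^ 6 + 1)
  have hdual := sum_sum_norm_geom_le M N (N ^ 6 + 1)
  rw [← hS] at hdual
  have hdual' : ((N ^ 6 + 1 : ℕ) : ℝ) * S + N ^ 4 ≤ 3 * N ^ 6 * S := by
    have h7 : (1 : ℝ) ≤ N ^ 6 := one_le_pow₀ hN'
    have h8 : (N : ℝ) ^ 4 ≤ N ^ 6 := pow_le_pow_right₀ hN' (by norm_num)
    push_cast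
    nlinarith
  have hfin : (S * N ^ 9 / 224) ^ 2 ≤ (7 * ε ^ 2 * N ^ 12 * Real.log N) * (3 * N ^ 6 * S) := by
    refine (pow_le_pow_left₀ (by positivity) hlow 2).trans (hup.trans ?_)
    refine mul_le_mul h2 (hdual.trans hdual') ?_ ?_
    · exact Finset.sum_nonneg fun q _ => Finset.sum_nonneg fun r _ => by positivity
    · have : 0 ≤ Real.log N := Real.log_nonneg hN'
      positivity
  have hS2 : S ≤ 21 * 224 ^ 2 * ε ^ 2 * Real.log N := by
    have h7 : 0 < (N : ℝ) ^ 18 * S / 224 ^ 2 := by positivity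
    refine le_of_mul_le_mul_left ?_ h7
    calc (N : ℝ) ^ 18 * S / 224 ^ 2 * S = (S * N ^ 9 / 224) ^ 2 := by ring
      _ ≤ _ := hfin
      _ = _ := by ring
  have hlogpos : 0 < Real.log N := by linarith
  rw [div_le_iff₀ (by positivity)] at h1
  have h7 : S * (8 * M) ≤ 21 * 224 ^ 2 * ε ^ 2 * Real.log N * (8 * M) := by gcongr
  nlinarith [mul_lt_mul_of_pos_right hεM hlogpos]
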